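/- arXiv:2501.12846 — 5 statements merged into one kernel-verified Lean document; each statement's English description precedes it below -/
import Mathlib

section
/- Let n ≥ 1 and let K = {A_i : i ∈ ℕ} be a countable family of pairwise nonisomorphic structures in Mod. Then K is =_{ℕ^ℕ}^{n+}-learnable if and only if for all i ≠ j there exists a set C ∈ Σ⁰_{2n}(Mod) such that either (every S ≅ A_i is in C and no S ≅ A_j is in C) or (every S ≅ A_j is in C and no S ≅ A_i is in C). -/
/-!  Common definitions.

`Tower n` is the space ℕ^(ℕ^(n+1)) of the paper: `Tower 0 = ℕ → ℕ`,
`Tower (n+1) = ℕ → Tower n`, each with the product topology (ℕ discrete).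
-/

def Tower : ℕ → Type
  | 0 => ℕ → ℕ
  | n + 1 => ℕ → Tower n

instance Tower.topologicalSpace : (n : ℕ) → TopologicalSpace (Tower n)
  | 0 => inferInstanceAs (TopologicalSpace (ℕ → ℕ))
  | n + 1 => letI := Tower.topologicalSpace n
             inferInstanceAs (TopologicalSpace (ℕ → Tower n))

/-- The Friedman–Stanley jump `E⁺` of an equivalence relation `E` on `X`. -/
def FSJump {X : Type*} (E : X → X → Prop) (p q : ℕ → X) : Prop :=
  (∀ k, ∃ l, E (p k) (q l)) ∧ ∀ l, ∃ k, E (q l) (p k)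

/-- The power `E^ω` of an equivalence relation `E` on `X`. -/
def RelPow {X : Type*} (E : X → X → Prop) (p q : ℕ → X) : Prop :=
  ∀ k, E (p k) (q k)

/-- `eqNatPlus n` is the relation `=_ℕ^{(n+1)+}` on `Tower n = ℕ^(ℕ^(n+1))`. -/
def eqNatPlus : (n : ℕ) → Tower n → Tower n → Prop
  | 0 => FSJump (· = · : ℕ → ℕ → Prop)
  | n + 1 => FSJump (eqNatPlus n)

/-- `eqBairePlus n` is the relation `=_{ℕ^ℕ}^{(n+1)+}` on `Tower (n+1) = ℕ^(ℕ^(n+2))`. -/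
def eqBairePlus : (n : ℕ) → Tower (n + 1) → Tower (n + 1) → Prop
  | 0 => FSJump (· = · : (ℕ → ℕ) → (ℕ → ℕ) → Prop)
  | n + 1 => FSJump (eqBairePlus n)

/-- `FullRel m` on `Tower m = ℕ^(ℕ^(m+1))`: for `m = 2n` it is `(=_ℕ^+)^{n(ω+)}`,
for `m = 2n+1` it is `(=_{ℕ^ℕ}^+)^{n(ω+)}` (with `E^{0(ω+)} = E`,
`E^{(n+1)(ω+)} = ((E^{n(ω+)})^ω)^+`). -/
def FullRel : (m : ℕ) → Tower m → Tower m → Prop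
  | 0 => FSJump (· = · : ℕ → ℕ → Prop)
  | 1 => FSJump (· = · : (ℕ → ℕ) → (ℕ → ℕ) → Prop)
  | m + 2 => FSJump (RelPow (FullRel m))

/-- The pair of canonical elements `(F_{m+1}, I_{m+1})` of `Tower m = ℕ^(ℕ^(m+1))`. -/
def can : (m : ℕ) → Tower m × Tower m
  | 0 => (fun k => if k = 0 then 0 else 1, fun _ => 1)
  | 1 => (fun i k => if i = 0 then 0 else if k + 1 < i then 0 else 1,
          fun i k => if k < i then 0 else 1)
  | m + 2 =>
      (fun i k => if i = 0 then (can m).1 else if k + 1 < i then (can m).1 else (can m).2,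
       fun i k => if k < i then (can m).1 else (can m).2)

/-- The canonical element `F_{m+1} ∈ ℕ^(ℕ^(m+1))`. -/
def canF (m : ℕ) : Tower m := (can m).1

/-- The canonical element `I_{m+1} ∈ ℕ^(ℕ^(m+1))`. -/
def canI (m : ℕ) : Tower m := (can m).2

/-- `p ∈ Tower m = ℕ^(ℕ^(m+1))` is `full_{m+1}`. -/
def IsFull (m : ℕ) (p : Tower m) : Prop := FullRel m p (canF m)

/-- `p ∈ Tower m = ℕ^(ℕ^(m+1))` is `initial_{m+1}`. -/
def IsInitial (m : ℕ) (p : Tower m) : Prop := FullRel m p (canI m)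

open Classical in
/-- The permission operator `∧₀`. -/
noncomputable def perm0 (p q : ℕ → ℕ) : ℕ → ℕ :=
  fun k => if ∀ j ≤ k, p j = q j then p k else 1

/-- The permission operator `∧_{m+1}` on `Tower m = ℕ^(ℕ^(m+1))`
(with `⟨·,·⟩ = Nat.pair`). -/
noncomputable def perm : (m : ℕ) → Tower m → Tower m → Tower m
  | 0, p, q => fun x => max (p (Nat.unpair x).1) (q (Nat.unpair x).2)
  | 1, p, q => fun x => perm0 (p (Nat.unpair x).1) (q (Nat.unpair x).2)
  | m + 2, p, q => fun x k => perm m (p (Nat.unpair x).1 k) (q (Nat.unpair x).2 k)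

/-- The operator `⊗_{m+1,i}` on `Tower m = ℕ^(ℕ^(m+1))` (with `⟨·,·⟩ = Nat.pair`). -/
def otimes : (m : ℕ) → ℕ → Tower m → Tower m
  | 0, i, p => fun k => Nat.pair (p k) i
  | m + 1, i, p => fun k => otimes m i (p k)

/-- `E` continuously reduces to `F`. -/
def ContReduces {X Y : Type*} [TopologicalSpace X] [TopologicalSpace Y]
    (E : X → X → Prop) (F : Y → Y → Prop) : Prop :=
  ∃ f : X → Y, Continuous f ∧ ∀ x x', E x x' ↔ F (f x) (f x')

/-- `SigmaLevel X n` is the pointclass `Σ⁰_{n+1}(X)`: `Σ⁰_1` = open sets,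
`Σ⁰_{n+1}` = countable unions of complements of `Σ⁰_n` sets. -/
def SigmaLevel (X : Type*) [TopologicalSpace X] : ℕ → Set (Set X)
  | 0 => {C | IsOpen C}
  | n + 1 => {C | ∃ A : ℕ → Set X, (∀ i, A i ∈ SigmaLevel X n) ∧ C = ⋃ i, (A i)ᶜ}

/-- The space of `(ι, ar)`-structures with domain ℕ. -/
def Md (ι : Type) (ar : ι → ℕ) : Type := ∀ i : ι, (Fin (ar i) → ℕ) → Bool

instance (ι : Type) (ar : ι → ℕ) : TopologicalSpace (Md ι ar) :=
  inferInstanceAs (TopologicalSpace (∀ i : ι, (Fin (ar i) → ℕ) → Bool))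

/-- Isomorphism of structures with domain ℕ. -/
def Iso {ι : Type} {ar : ι → ℕ} (A B : Md ι ar) : Prop :=
  ∃ σ : ℕ → ℕ, Function.Bijective σ ∧ ∀ i v, A i v = B i (σ ∘ v)

/-- The learning domain of a family: the closure of `K` under isomorphism. -/
def LearnDom {ι : Type} {ar : ι → ℕ} (K : Set (Md ι ar)) : Set (Md ι ar) :=
  {S | ∃ A ∈ K, Iso S A}

/-- The family `K` is `E`-learnable. -/
def Learnable {ι : Type} {ar : ι → ℕ} {X : Type*} [TopologicalSpace X]
    (E : X → X → Prop) (K : Set (Md ι ar)) : Prop :=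
  ∃ Γ : LearnDom K → X, Continuous Γ ∧
    ∀ S S' : LearnDom K, (Iso S.1 S'.1 ↔ E (Γ S) (Γ S'))

/-- A countable family of pairwise nonisomorphic structures. -/
def GoodFamily {ι : Type} {ar : ι → ℕ} (K : Set (Md ι ar)) : Prop :=
  K.Countable ∧ ∀ A ∈ K, ∀ B ∈ K, A ≠ B → ¬ Iso A B

/-- `E` is learn-reducible to `F` (w.r.t. structures in `Md ι ar`). -/
def LearnRed (ι : Type) (ar : ι → ℕ) {X Y : Type*} [TopologicalSpace X]
    [TopologicalSpace Y] (E : X → X → Prop) (F : Y → Y → Prop) : Prop :=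
  ∀ K : Set (Md ι ar), GoodFamily K → Learnable E K → Learnable F K

/-- `E` is compact for learning (w.r.t. structures in `Md ι ar`). -/
def CompactForLearning (ι : Type) (ar : ι → ℕ) {X : Type*} [TopologicalSpace X]
    (E : X → X → Prop) : Prop :=
  ∀ K : Set (Md ι ar), GoodFamily K →
    (Learnable E K ↔ ∀ A ∈ K, ∀ B ∈ K, A ≠ B → Learnable E ({A, B} : Set (Md ι ar)))

open Set TopologicalSpace Topology

namespace Aux13

/-- uniform version of the relations -/
def R : (m : ℕ) → Tower m → Tower m → Prop
  | 0 => fun p q => p = q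
  | m + 1 => FSJump (R m)

theorem eqBaire_eq (n : ℕ) : eqBairePlus n = R (n + 1) := by
  induction n with
  | zero => rfl
  | succ n ih =>
    show FSJump (eqBairePlus n) = FSJump (R (n + 1))
    rw [ih]

theorem R_refl : ∀ (m : ℕ) (p : Tower m), R m p p
  | 0, _ => rfl
  | m + 1, p => ⟨fun k => ⟨k, R_refl m (p k)⟩, fun k => ⟨k, R_refl m (p k)⟩⟩

theorem R_symm : ∀ (m : ℕ) {p q : Tower m}, R m p q → R m q p
  | 0, _, _, h => Eq.symm h
  | _ + 1, _, _, h => ⟨h.2, h.1⟩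

theorem R_trans : ∀ (m : ℕ) {p q r : Tower m}, R m p q → R m q r → R m p r
  | 0, _, _, _, h, h' => Eq.trans h h'
  | m + 1, p, q, r, h, h' => by
    refine ⟨fun k => ?_, fun k => ?_⟩
    · obtain ⟨l, hl⟩ := h.1 k
      obtain ⟨l', hl'⟩ := h'.1 l
      exact ⟨l', R_trans m hl hl'⟩
    · obtain ⟨l, hl⟩ := h'.2 k
      obtain ⟨l', hl'⟩ := h.2 l
      exact ⟨l', R_trans m hl hl'⟩

theorem R_otimes : ∀ (m : ℕ) (i j : ℕ) (p q : Tower m),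
    R m (otimes m i p) (otimes m j q) ↔ i = j ∧ R m p q
  | 0, i, j, p, q => by
    constructor
    · intro h
      have h' : ∀ k, Nat.pair (p k) i = Nat.pair (q k) j := fun k => congrFun h k
      simp only [Nat.pair_eq_pair] at h'
      exact ⟨(h' 0).2, funext fun k => (h' k).1⟩
    · rintro ⟨rfl, h⟩
      have h : p = q := h
      rw [h]; exact R_refl 0 _
  | m + 1, i, j, p, q => by
    have key : ∀ i j (p q : Tower m), R m (otimes m i p) (otimes m j q) ↔ i = j ∧ R m p q :=
      R_otimes m
    constructor
    · rintro ⟨h1, h2⟩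
      have h1 : ∀ k, ∃ l, R m (otimes m i (p k)) (otimes m j (q l)) := h1
      have h2 : ∀ k, ∃ l, R m (otimes m j (q k)) (otimes m i (p l)) := h2
      simp only [key] at h1 h2
      refine ⟨(h1 0).choose_spec.1, fun k => ?_, fun k => ?_⟩
      · obtain ⟨l, hl⟩ := h1 k
        exact ⟨l, hl.2⟩
      · obtain ⟨l, hl⟩ := h2 k
        exact ⟨l, hl.2⟩
    · rintro ⟨rfl, h1, h2⟩
      refine ⟨fun k => ?_, fun k => ?_⟩
      · obtain ⟨l, hl⟩ := h1 k
        exact ⟨l, (key _ _ _ _).2 ⟨rfl, hl⟩⟩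
      · obtain ⟨l, hl⟩ := h2 k
        exact ⟨l, (key _ _ _ _).2 ⟨rfl, hl⟩⟩

theorem cont_otimes : ∀ (m i : ℕ), Continuous (otimes m i)
  | 0, i => by
    refine continuous_pi (X := ℕ → ℕ) fun k => ?_
    exact (continuous_of_discreteTopology (f := fun t : ℕ => Nat.pair t i)).comp
      (continuous_apply (A := fun _ : ℕ => ℕ) k)
  | m + 1, i => by
    refine continuous_pi (X := ℕ → Tower m) fun k => ?_
    exact (cont_otimes m i).comp (continuous_apply (A := fun _ : ℕ => Tower m) k)

/-- amalgamation of a sequence -/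
def merge (m : ℕ) (p : ℕ → Tower (m + 1)) : Tower (m + 1) :=
  fun x => otimes m (Nat.unpair x).1 (p (Nat.unpair x).1 (Nat.unpair x).2)

theorem R_merge (m : ℕ) (p q : ℕ → Tower (m + 1)) :
    R (m + 1) (merge m p) (merge m q) ↔ ∀ k, R (m + 1) (p k) (q k) := by
  have aux : ∀ p q : ℕ → Tower (m + 1),
      (∀ x, ∃ y, R m (merge m p x) (merge m q y)) ↔ ∀ k i, ∃ j, R m (p k i) (q k j) := by
    intro p q
    constructor
    · intro h k i
      obtain ⟨y, hy⟩ := h (Nat.pair k i)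
      simp only [merge, R_otimes, Nat.unpair_pair] at hy
      obtain ⟨h1, h2⟩ := hy
      rw [← h1] at h2
      exact ⟨_, h2⟩
    · intro h x
      obtain ⟨j, hj⟩ := h (Nat.unpair x).1 (Nat.unpair x).2
      refine ⟨Nat.pair (Nat.unpair x).1 j, ?_⟩
      simp only [merge, R_otimes, Nat.unpair_pair]
      exact ⟨trivial, hj⟩
  constructor
  · rintro ⟨h1, h2⟩ k
    exact ⟨(aux p q).1 h1 k, (aux q p).1 h2 k⟩
  · intro h
    exact ⟨(aux p q).2 fun k => (h k).1, (aux q p).2 fun k => (h k).2⟩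

theorem cont_merge {X : Type*} [TopologicalSpace X] (m : ℕ) (f : ℕ → X → Tower (m + 1))
    (hf : ∀ k, Continuous (f k)) : Continuous fun x => merge m fun k => f k x := by
  refine continuous_pi (X := X) (A := fun _ : ℕ => Tower m) fun y => ?_
  refine (cont_otimes m _).comp ?_
  exact (continuous_apply (A := fun _ : ℕ => Tower m) _).comp (hf _)

section sigma
variable {X : Type*} [TopologicalSpace X]

theorem sig_both (n : ℕ) : (∅ : Set X) ∈ SigmaLevel X n ∧ (univ : Set X) ∈ SigmaLevel X n := by
  induction n with
  | zero => exact ⟨isOpen_empty, isOpen_univ⟩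
  | succ n ih =>
    exact ⟨⟨fun _ => univ, fun _ => ih.2, by simp⟩, ⟨fun _ => ∅, fun _ => ih.1, by simp [iUnion_const]⟩⟩

theorem sig_iUnion_compl {κ : Type*} [Countable κ] (n : ℕ) (A : κ → Set X)
    (h : ∀ k, A k ∈ SigmaLevel X n) : (⋃ k, (A k)ᶜ) ∈ SigmaLevel X (n + 1) := by
  rcases isEmpty_or_nonempty κ with hk | hk
  · rw [iUnion_of_empty]; exact (sig_both _).1
  · obtain ⟨e, he⟩ := exists_surjective_nat κ
    exact ⟨fun i => A (e i), fun i => h _, (he.iUnion_comp fun k => (A k)ᶜ).symm⟩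

theorem sig_union (n : ℕ) {A B : Set X} (hA : A ∈ SigmaLevel X n) (hB : B ∈ SigmaLevel X n) :
    A ∪ B ∈ SigmaLevel X n := by
  cases n with
  | zero => exact IsOpen.union hA hB
  | succ n =>
    obtain ⟨A, hA, rfl⟩ := hA
    obtain ⟨B, hB, rfl⟩ := hB
    have := sig_iUnion_compl n (κ := ℕ ⊕ ℕ) (Sum.elim A B) (by rintro (k | k); exacts [hA k, hB k])
    rwa [iUnion_sum] at this

theorem sig_inter (n : ℕ) {A B : Set X} (hA : A ∈ SigmaLevel X n) (hB : B ∈ SigmaLevel X n) :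
    A ∩ B ∈ SigmaLevel X n := by
  cases n with
  | zero => exact IsOpen.inter hA hB
  | succ n =>
    obtain ⟨A, hA, rfl⟩ := hA
    obtain ⟨B, hB, rfl⟩ := hB
    have := sig_iUnion_compl n (κ := ℕ × ℕ) (fun k => A k.1 ∪ B k.2)
      (fun k => sig_union n (hA _) (hB _))
    convert this using 1
    ext x
    simp

theorem sig_iInter_le (n : ℕ) (D : ℕ → Set X) (h : ∀ j, D j ∈ SigmaLevel X n) (j : ℕ) :
    {x | ∀ i ≤ j, x ∈ D i} ∈ SigmaLevel X n := by
  induction j with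
  | zero => simpa using h 0
  | succ j ih =>
    convert sig_inter n ih (h (j + 1)) using 1
    ext x
    constructor
    · intro hx
      exact ⟨fun i hi => hx i (by omega), hx _ le_rfl⟩
    · rintro ⟨h1, h2⟩ i hi
      rcases Nat.lt_or_ge j i with h | h
      · rwa [show i = j + 1 by omega]
      · exact h1 i h

theorem sig_preimage {Y : Type*} [TopologicalSpace Y] {f : Y → X} (hf : Continuous f) :
    ∀ (n : ℕ) {A : Set X}, A ∈ SigmaLevel X n → f ⁻¹' A ∈ SigmaLevel Y n
  | 0, _, hA => IsOpen.preimage hf hA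
  | n + 1, _, ⟨B, hB, h⟩ => ⟨fun i => f ⁻¹' B i, fun i => sig_preimage hf n (hB i), by
      rw [h]; simp [preimage_iUnion]⟩

theorem sig_lift (Y : Set X) : ∀ (n : ℕ) {A : Set Y}, A ∈ SigmaLevel Y n →
    ∃ B ∈ SigmaLevel X n, A = Subtype.val ⁻¹' B
  | 0, _, hA => by
    obtain ⟨U, hU, h⟩ := isOpen_induced_iff.1 hA
    exact ⟨U, hU, h.symm⟩
  | n + 1, _, ⟨B, hB, h⟩ => by
    choose D hD hD' using fun i => sig_lift Y n (hB i)
    refine ⟨_, ⟨D, hD, rfl⟩, ?_⟩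
    rw [h, preimage_iUnion]
    congr 1
    funext i
    rw [hD' i]; rfl

theorem sig_baire : ∀ (n : ℕ) {A : Set X}, A ∈ SigmaLevel X n → BaireMeasurableSet A
  | 0, _, hA => IsOpen.baireMeasurableSet hA
  | n + 1, _, ⟨B, hB, h⟩ => by
    rw [h]
    exact BaireMeasurableSet.iUnion fun i => (sig_baire n (hB i)).compl

end sigma

instance tower_t2 : ∀ m, T2Space (Tower m)
  | 0 => inferInstanceAs (T2Space (ℕ → ℕ))
  | m + 1 => by
    haveI := tower_t2 m
    exact inferInstanceAs (T2Space (ℕ → Tower m))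

theorem R_sigma : ∀ (m : ℕ) (p : Tower m), {q | R m q p}ᶜ ∈ SigmaLevel (Tower m) (2 * m)
  | 0, p => (isClosed_singleton (x := p)).isOpen_compl
  | m + 1, p => by
    have h1 : ∀ k, {q : Tower (m+1) | ∃ l, R m (q k) (p l)} ∈ SigmaLevel (Tower (m+1)) (2 * m + 1) := by
      intro k
      have hc : Continuous fun q : Tower (m+1) => q k := continuous_apply (A := fun _ : ℕ => Tower m) k
      convert sig_iUnion_compl (2*m) _ (fun l => sig_preimage hc _ (R_sigma m (p l))) using 1
      ext q; simp
    have h2 : ∀ l, {q : Tower (m+1) | ∃ k, R m (q k) (p l)} ∈ SigmaLevel (Tower (m+1)) (2 * m + 1) := by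
      intro l
      have hc : ∀ k, Continuous fun q : Tower (m+1) => q k :=
        fun k => continuous_apply (A := fun _ : ℕ => Tower m) k
      convert sig_iUnion_compl (2*m) _ (fun k => sig_preimage (hc k) _ (R_sigma m (p l))) using 1
      ext q; simp
    have : _ ∈ SigmaLevel (Tower (m + 1)) (2 * (m + 1)) :=
      sig_union _ (sig_iUnion_compl _ _ h1) (sig_iUnion_compl _ _ h2)
    convert this using 1
    ext q
    have e : R (m+1) q p ↔ (∀ k, ∃ l, R m (q k) (p l)) ∧ ∀ l, ∃ k, R m (q k) (p l) := by
      constructor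
      · rintro ⟨h1, h2⟩
        exact ⟨h1, fun l => (h2 l).imp fun k hk => R_symm m hk⟩
      · rintro ⟨h1, h2⟩
        exact ⟨h1, fun l => (h2 l).imp fun k hk => R_symm m hk⟩
    simp only [mem_compl_iff, mem_ofPred_eq, mem_union, mem_iUnion, e]
    rw [not_and_or, not_forall, not_forall]

section coding
variable {X : Type*} [TopologicalSpace X]

def HH {m : ℕ} (a : ℕ → Tower m) : Tower (m + 1) := a
def GG {m : ℕ} (a : ℕ → Tower m) (b : Tower m) : Tower (m + 1) :=
  fun k => Nat.casesOn k b a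

theorem GG_HH {m : ℕ} (a : ℕ → Tower m) (b : Tower m) (h : ∀ k, ¬ R m b (a k)) :
    ¬ R (m + 1) (GG a b) (HH a) := by
  rintro ⟨h1, _⟩
  obtain ⟨l, hl⟩ := h1 0
  exact h l hl

def Coded (X : Type*) [TopologicalSpace X] (m : ℕ) (a : ℕ → Tower m) (b : Tower m) : Prop :=
  (∀ k, ¬ R m b (a k)) ∧ ∀ C ∈ SigmaLevel X (2 * m), ∃ f : X → Tower m, Continuous f ∧
    (∀ x ∉ C, R m (f x) b) ∧ ∀ x ∈ C, ∃ k, R m (f x) (a k)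

theorem code_sigma {m : ℕ} {a : ℕ → Tower m} {b : Tower m} (h : Coded X m a b)
    (D : Set X) (hD : D ∈ SigmaLevel X (2 * m + 1)) :
    ∃ g : X → Tower (m + 1), Continuous g ∧ (∀ x ∈ D, R (m + 1) (g x) (GG a b)) ∧
      ∀ x ∉ D, R (m + 1) (g x) (HH a) := by
  obtain ⟨E, hE, rfl⟩ := hD
  choose f hf hb ha using fun i => h.2 (E i) (hE i)
  let g : X → Tower (m + 1) := fun x k => if k % 2 = 0 then f (k / 2) x else a (k / 2)
  have ge : ∀ x k, g x (2 * k) = f k x := by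
    intro x k
    show (if (2 * k) % 2 = 0 then f ((2*k) / 2) x else a ((2*k) / 2)) = _
    rw [if_pos (by omega), show 2 * k / 2 = k by omega]
  have go : ∀ x k, g x (2 * k + 1) = a k := by
    intro x k
    show (if (2 * k + 1) % 2 = 0 then f ((2*k+1) / 2) x else a ((2*k+1) / 2)) = _
    rw [if_neg (by omega), show (2 * k + 1) / 2 = k by omega]
  have par : ∀ y : ℕ, ∃ k, y = 2 * k ∨ y = 2 * k + 1 := fun y => ⟨y / 2, by omega⟩
  refine ⟨g, ?_, ?_, ?_⟩
  · refine continuous_pi (X := X) (A := fun _ : ℕ => Tower m) fun y => ?_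
    obtain ⟨k, rfl | rfl⟩ := par y
    · simp only [ge]; exact hf k
    · simp only [go]; exact continuous_const
  · intro x hx
    simp only [mem_iUnion, mem_compl_iff] at hx
    obtain ⟨i, hi⟩ := hx
    refine ⟨fun y => ?_, fun y => ?_⟩
    · obtain ⟨k, rfl | rfl⟩ := par y
      · rw [ge]
        by_cases hk : x ∈ E k
        · obtain ⟨l, hl⟩ := ha k x hk
          exact ⟨l + 1, hl⟩
        · exact ⟨0, hb k x hk⟩
      · rw [go]; exact ⟨k + 1, R_refl m _⟩
    · cases y with
      | zero => exact ⟨2 * i, by rw [ge]; exact R_symm m (hb i x hi)⟩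
      | succ y => exact ⟨2 * y + 1, by rw [go]; exact R_refl m _⟩
  · intro x hx
    simp only [mem_iUnion, mem_compl_iff, not_exists, not_not] at hx
    refine ⟨fun y => ?_, fun y => ?_⟩
    · obtain ⟨k, rfl | rfl⟩ := par y
      · rw [ge]; exact ha k x (hx k)
      · rw [go]; exact ⟨k, R_refl m _⟩
    · exact ⟨2 * y + 1, by rw [go]; exact R_refl m _⟩

theorem code_succ {m : ℕ} {a : ℕ → Tower m} {b : Tower m} (h : Coded X m a b) :
    Coded X (m + 1) (fun k => merge m fun j => if j < k then GG a b else HH a)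
      (merge m fun _ => GG a b) := by
  refine ⟨fun k hk => ?_, ?_⟩
  · have := (R_merge _ _ _).1 hk k
    simp only [lt_irrefl, if_false] at this
    exact GG_HH a b h.1 this
  · rintro C ⟨D, hD, rfl⟩
    choose g hg hg1 hg2 using fun j => code_sigma h _ (sig_iInter_le (2 * m + 1) D hD j)
    refine ⟨_, cont_merge m g hg, ?_, ?_⟩
    · intro x hx
      simp only [mem_iUnion, mem_compl_iff, not_exists, not_not] at hx
      rw [R_merge]
      exact fun k => hg1 k x fun i _ => hx i
    · intro x hx
      simp only [mem_iUnion, mem_compl_iff] at hx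
      classical
      refine ⟨Nat.find hx, ?_⟩
      rw [R_merge]
      intro k
      split_ifs with hk
      · refine hg1 k x fun i hi => ?_
        have := Nat.find_min hx (lt_of_le_of_lt hi hk)
        exact not_not.1 this
      · refine hg2 k x fun hx' => ?_
        exact Nat.find_spec hx (hx' _ (not_lt.1 hk))

theorem code_zero (hz : ∀ U : Set X, IsOpen U → ∃ V : ℕ → Set X, (∀ k, IsClopen (V k)) ∧ U = ⋃ k, V k) :
    Coded X 0 (fun k => (fun j => if j < k then 0 else 1 : ℕ → ℕ)) (fun _ => 0 : ℕ → ℕ) := by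
  refine ⟨fun k hk => ?_, fun C hC => ?_⟩
  · have hk : (fun _ => 0 : ℕ → ℕ) = fun j => if j < k then 0 else 1 := hk
    have := congrFun hk k
    simp at this
  · obtain ⟨V, hV, rfl⟩ := hz C hC
    classical
    refine ⟨fun x => (fun j => if x ∈ {y | ∃ i ≤ j, y ∈ V i} then 1 else 0 : ℕ → ℕ), ?_, ?_, ?_⟩
    · refine continuous_pi (X := X) (A := fun _ : ℕ => ℕ) fun j => ?_
      have hcl : IsClopen {y | ∃ i ≤ j, y ∈ V i} := by
        have : {y | ∃ i ≤ j, y ∈ V i} = ⋃ i ∈ Set.Iic j, V i := by ext; simp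
        rw [this]
        exact (Set.finite_Iic j).isClopen_biUnion fun i _ => hV i
      refine continuous_const.if (fun y hy => ?_) continuous_const
      have : frontier {y | ∃ i ≤ j, y ∈ V i} = ∅ := hcl.frontier_eq
      exact absurd (show y ∈ frontier {y | ∃ i ≤ j, y ∈ V i} from hy) (by rw [this]; simp)
    · intro x hx
      simp only [mem_iUnion, not_exists] at hx
      show _ = _
      funext j
      beta_reduce
      rw [if_neg]
      rintro ⟨i, _, hi⟩
      exact hx i hi
    · intro x hx
      simp only [mem_iUnion] at hx
      refine ⟨Nat.find hx, ?_⟩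
      show _ = _
      funext j
      beta_reduce
      split_ifs with h1 h2 h2
      · obtain ⟨i, hi, hi'⟩ := h1
        exact absurd hi' (Nat.find_min hx (lt_of_le_of_lt hi h2))
      · rfl
      · rfl
      · exact absurd ⟨Nat.find hx, not_lt.1 h2, Nat.find_spec hx⟩ h1

theorem code_all (hz : ∀ U : Set X, IsOpen U → ∃ V : ℕ → Set X, (∀ k, IsClopen (V k)) ∧ U = ⋃ k, V k)
    (m : ℕ) : ∃ a b, Coded X m a b := by
  induction m with
  | zero => exact ⟨_, _, code_zero hz⟩
  | succ m ih =>
    obtain ⟨a, b, h⟩ := ih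
    exact ⟨_, _, code_succ h⟩

end coding

section vaught
variable {X G : Type*} [TopologicalSpace X] [TopologicalSpace G]

/-- Vaught transform -/
def VD (α : G → X → X) (C : Set X) (U : Set G) : Set X :=
  {S | ¬ IsMeagre (U ∩ {g | α g S ∈ C})}

theorem VD_sigma [BaireSpace G] [SecondCountableTopology G] (α : G → X → X)
    (h1 : ∀ g, Continuous (α g)) (h2 : ∀ S, Continuous fun g => α g S) :
    ∀ (n : ℕ) (C : Set X), C ∈ SigmaLevel X n → ∀ U : Set G, IsOpen U →
      VD α C U ∈ SigmaLevel X n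
  | 0, C, hC, U, hU => by
    have : VD α C U = ⋃ g ∈ U, α g ⁻¹' C := by
      ext S
      simp only [VD, mem_ofPred_eq, mem_iUnion, mem_preimage, exists_prop]
      have ho : IsOpen (U ∩ {g | α g S ∈ C}) := hU.inter (IsOpen.preimage (h2 S) hC)
      constructor
      · intro h
        obtain ⟨g, hg⟩ := nonempty_of_not_isMeagre h
        exact ⟨g, hg.1, hg.2⟩
      · rintro ⟨g, hg1, hg2⟩
        exact not_isMeagre_of_isOpen ho ⟨g, hg1, hg2⟩
    rw [this]
    exact isOpen_biUnion fun g _ => IsOpen.preimage (h1 g) hC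
  | n + 1, C, hC, U, hU => by
    obtain ⟨B, hB, rfl⟩ := hC
    have ih := fun i => VD_sigma α h1 h2 n (B i) (hB i)
    have key := sig_iUnion_compl (X := X) n (κ := ℕ × {V : countableBasis G // V.1 ⊆ U})
      (fun k => VD α (B k.1) k.2.1.1)
      (fun k => ih k.1 _ (isOpen_of_mem_countableBasis k.2.1.2))
    convert key using 1
    ext S
    simp only [VD, mem_ofPred_eq, mem_iUnion, mem_compl_iff, not_not]
    constructor
    · intro h
      have : ∃ i, ¬ IsMeagre (U ∩ {g | α g S ∉ B i}) := by
        by_contra hcon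
        push Not at hcon
        refine h ((isMeagre_iUnion hcon).mono ?_)
        rintro g ⟨hg, i, hi⟩
        exact mem_iUnion.2 ⟨i, hg, hi⟩
      obtain ⟨i, hi⟩ := this
      have hbm : BaireMeasurableSet {g | α g S ∈ B i} :=
        sig_baire n (sig_preimage (h2 S) n (hB i))
      obtain ⟨O, hO, hOe⟩ := hbm.compl.residualEq_isOpen
      have hne : (U ∩ O).Nonempty := by
        by_contra hcon
        rw [not_nonempty_iff_eq_empty] at hcon
        apply hi
        show _ ∈ residual G
        filter_upwards [hOe.mem_iff] with g hg
        rintro ⟨hgU, hg2⟩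
        have : g ∈ U ∩ O := ⟨hgU, hg.1 hg2⟩
        rw [hcon] at this
        exact this
      obtain ⟨g0, hg0⟩ := hne
      obtain ⟨V, hV, _, hVs⟩ :=
        (isBasis_countableBasis G).exists_subset_of_mem_open hg0 (hU.inter hO)
      refine ⟨(i, ⟨⟨V, hV⟩, fun g hg => (hVs hg).1⟩), ?_⟩
      show _ ∈ residual G
      filter_upwards [hOe.mem_iff] with g hg
      rintro ⟨hgV, hg2⟩
      exact hg.2 (hVs hgV).2 hg2
    · rintro ⟨⟨i, ⟨V, hV⟩, hVU⟩, hm⟩ hcon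
      refine not_isMeagre_of_isOpen (isOpen_of_mem_countableBasis hV)
        (nonempty_of_mem_countableBasis hV) ((hm.union hcon).mono ?_)
      intro g hg
      by_cases hgB : α g S ∈ B i
      · exact Or.inl ⟨hg, hgB⟩
      · exact Or.inr ⟨hVU hg, i, hgB⟩

end vaught

/-- the Polish group of permutations -/
def PG : Set ((ℕ → ℕ) × (ℕ → ℕ)) := {x | (∀ k, x.1 (x.2 k) = k) ∧ ∀ k, x.2 (x.1 k) = k}

theorem cont_app {Y : Type*} [TopologicalSpace Y] {f : Y → ℕ → ℕ} {e : Y → ℕ} (hf : Continuous f)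
    (he : Continuous e) : Continuous fun y => f y (e y) := by
  have : Continuous fun p : ℕ × (ℕ → ℕ) => p.2 p.1 :=
    continuous_prod_of_discrete_left.2 fun k => continuous_apply k
  exact this.comp (he.prodMk hf)

theorem PG_closed : IsClosed PG := by
  have : PG = (⋂ k, {x | x.1 (x.2 k) = k}) ∩ ⋂ k, {x | x.2 (x.1 k) = k} := by
    ext x; simp [PG]
  rw [this]
  refine IsClosed.inter (isClosed_iInter fun k => isClosed_eq ?_ continuous_const)
    (isClosed_iInter fun k => isClosed_eq ?_ continuous_const)
  · exact cont_app continuous_fst ((continuous_apply k).comp continuous_snd)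
  · exact cont_app continuous_snd ((continuous_apply k).comp continuous_fst)

instance : PolishSpace PG := PG_closed.polishSpace

def pmul (h g : PG) : PG :=
  ⟨(h.1.1 ∘ g.1.1, g.1.2 ∘ h.1.2), by
    refine ⟨fun k => ?_, fun k => ?_⟩
    · simp [g.2.1, h.2.1]
    · simp [g.2.2, h.2.2]⟩

def pinv (h : PG) : PG := ⟨(h.1.2, h.1.1), h.2.2, h.2.1⟩

theorem cont_pmul (h : PG) : Continuous (pmul h) := by
  refine Continuous.subtype_mk (Continuous.prodMk ?_ ?_) _
  · refine continuous_pi fun k => ?_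
    exact (continuous_of_discreteTopology (f := h.1.1)).comp
      ((continuous_apply k).comp (continuous_fst.comp continuous_subtype_val))
  · refine continuous_pi fun k => ?_
    exact (continuous_apply (h.1.2 k)).comp (continuous_snd.comp continuous_subtype_val)

def pmulH (h : PG) : PG ≃ₜ PG where
  toFun := pmul h
  invFun := pmul (pinv h)
  left_inv g := by
    apply Subtype.ext; apply Prod.ext <;> funext k <;> simp [pmul, pinv, h.2.2]
  right_inv g := by
    apply Subtype.ext; apply Prod.ext <;> funext k <;> simp [pmul, pinv, h.2.1]
  continuous_toFun := cont_pmul h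
  continuous_invFun := cont_pmul _

section md
variable {ι : Type} {ar : ι → ℕ}

def act (g : PG) (S : Md ι ar) : Md ι ar := fun i v => S i (g.1.1 ∘ v)

theorem cont_act (g : PG) : Continuous (act g : Md ι ar → Md ι ar) := by
  refine continuous_pi (X := Md ι ar) fun i => continuous_pi fun v => ?_
  exact (continuous_apply (A := fun _ : Fin (ar i) → ℕ => Bool) (g.1.1 ∘ v)).comp
    (continuous_apply (A := fun i : ι => (Fin (ar i) → ℕ) → Bool) i)

theorem cont_act' (S : Md ι ar) : Continuous fun g : PG => act g S := by
  refine continuous_pi (X := PG) (A := fun i : ι => (Fin (ar i) → ℕ) → Bool)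
    fun i => continuous_pi fun v => ?_
  refine (continuous_of_discreteTopology (f := S i)).comp ?_
  refine continuous_pi fun k => ?_
  exact (continuous_apply (v k)).comp (continuous_fst.comp continuous_subtype_val)

theorem iso_iff {S T : Md ι ar} : Iso S T ↔ ∃ g : PG, S = act g T := by
  constructor
  · rintro ⟨σ, hσ, h⟩
    let e := Equiv.ofBijective σ hσ
    refine ⟨⟨(e, e.symm), fun k => e.apply_symm_apply k, fun k => e.symm_apply_apply k⟩, ?_⟩
    funext i v
    exact h i v
  · rintro ⟨g, rfl⟩
    exact ⟨g.1.1, Function.bijective_iff_has_inverse.2 ⟨g.1.2, g.2.2, g.2.1⟩, fun i v => rfl⟩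

theorem iso_refl (S : Md ι ar) : Iso S S := ⟨id, Function.bijective_id, fun _ _ => rfl⟩

theorem iso_trans {S T V : Md ι ar} : Iso S T → Iso T V → Iso S V := by
  rintro ⟨σ, hσ, h⟩ ⟨τ, hτ, h'⟩
  exact ⟨τ ∘ σ, hτ.comp hσ, fun i v => by rw [h, h']; rfl⟩

theorem iso_symm {S T : Md ι ar} : Iso S T → Iso T S := by
  rw [iso_iff, iso_iff]
  rintro ⟨g, rfl⟩
  refine ⟨pinv g, ?_⟩
  funext i v
  show T i v = T i (g.1.1 ∘ (g.1.2 ∘ v))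
  congr 1
  funext k
  exact (g.2.1 _).symm

theorem VD_inv1 (C : Set (Md ι ar)) {S T : Md ι ar} (h : Iso S T) (hS : S ∈ VD act C univ) :
    T ∈ VD act C univ := by
  obtain ⟨g, rfl⟩ := iso_iff.1 h
  intro hm
  refine hS ((hm.preimage_of_isOpenMap (pmulH g).continuous (pmulH g).isOpenMap).mono ?_)
  rintro x ⟨_, hx⟩
  exact ⟨trivial, hx⟩

theorem invariant (n : ℕ) (C : Set (Md ι ar)) (hC : C ∈ SigmaLevel (Md ι ar) n) :
    ∃ D ∈ SigmaLevel (Md ι ar) n, (∀ S T, Iso S T → (S ∈ D ↔ T ∈ D)) ∧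
      ∀ B, ((∀ S, Iso S B → S ∈ C) → B ∈ D) ∧ ((∀ S, Iso S B → S ∉ C) → B ∉ D) := by
  haveI : Nonempty PG := ⟨⟨(id, id), fun _ => rfl, fun _ => rfl⟩⟩
  refine ⟨VD act C univ, VD_sigma act cont_act cont_act' n C hC univ isOpen_univ,
    fun S T h => ⟨VD_inv1 C h, VD_inv1 C (iso_symm h)⟩, fun B => ⟨fun h => ?_, fun h hB => ?_⟩⟩
  · have : (univ : Set PG) ∩ {g | act g B ∈ C} = univ := by
      ext g
      simp only [univ_inter, mem_univ, iff_true]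
      exact h _ (iso_iff.2 ⟨g, rfl⟩)
    show ¬ IsMeagre _
    rw [this]
    exact not_isMeagre_of_isOpen isOpen_univ univ_nonempty
  · obtain ⟨g, _, hg⟩ := nonempty_of_not_isMeagre hB
    exact h _ (iso_iff.2 ⟨g, rfl⟩) hg

theorem md_zero [Countable ι] (U : Set (Md ι ar)) (hU : IsOpen U) :
    ∃ V : ℕ → Set (Md ι ar), (∀ k, IsClopen (V k)) ∧ U = ⋃ k, V k := by
  haveI : T2Space (Md ι ar) := inferInstanceAs (T2Space (∀ i : ι, (Fin (ar i) → ℕ) → Bool))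
  haveI : CompactSpace (Md ι ar) :=
    inferInstanceAs (CompactSpace (∀ i : ι, (Fin (ar i) → ℕ) → Bool))
  haveI : TotallyDisconnectedSpace (Md ι ar) :=
    inferInstanceAs (TotallyDisconnectedSpace (∀ i : ι, (Fin (ar i) → ℕ) → Bool))
  haveI : SecondCountableTopology (Md ι ar) :=
    inferInstanceAs (SecondCountableTopology (∀ i : ι, (Fin (ar i) → ℕ) → Bool))
  obtain ⟨s, hs, hc, rfl⟩ :=
    (isTopologicalBasis_isClopen (X := Md ι ar)).exists_countable_biUnion_of_isOpen hU
  rcases s.eq_empty_or_nonempty with rfl | hne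
  · exact ⟨fun _ => ∅, fun _ => isClopen_empty, by simp⟩
  · obtain ⟨e, rfl⟩ := hc.exists_eq_range hne
    exact ⟨e, fun k => hs ⟨k, rfl⟩, by simp⟩

theorem forward (n : ℕ) (Y : Set (Md ι ar)) (Γ : Y → Tower (n + 1)) (hΓ : Continuous Γ)
    (h : ∀ S S' : Y, (Iso S.1 S'.1 ↔ R (n + 1) (Γ S) (Γ S'))) (hY : ∀ S B, Iso S B → B ∈ Y → S ∈ Y)
    (A B : Y) (hAB : ∃ k, ∀ l, ¬ R n (Γ A k) (Γ B l)) :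
    ∃ C ∈ SigmaLevel (Md ι ar) (2 * n + 1),
      (∀ S, Iso S A.1 → S ∈ C) ∧ (∀ S, Iso S B.1 → S ∉ C) := by
  obtain ⟨k, hk⟩ := hAB
  have hc : ∀ l, Continuous fun S => Γ S l :=
    fun l => (continuous_apply (A := fun _ : ℕ => Tower n) l).comp hΓ
  obtain ⟨C, hC, hC'⟩ := sig_lift Y (2 * n + 1) (sig_iUnion_compl (2 * n) _
    (fun l => sig_preimage (hc l) _ (R_sigma n (Γ A k))))
  have hmem : ∀ S : Y, S.1 ∈ C ↔ ∃ l, R n (Γ S l) (Γ A k) := by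
    intro S
    have : S.1 ∈ C ↔ S ∈ Subtype.val ⁻¹' C := Iff.rfl
    rw [this, ← hC']
    simp
  refine ⟨C, hC, fun S hS => ?_, fun S hS hSC => ?_⟩
  · have hSY := hY S A hS A.2
    have := (h ⟨S, hSY⟩ A).1 hS
    obtain ⟨l, hl⟩ := this.2 k
    exact (hmem ⟨S, hSY⟩).2 ⟨l, R_symm n hl⟩
  · have hSY := hY S B hS B.2
    obtain ⟨l, hl⟩ := (hmem ⟨S, hSY⟩).1 hSC
    obtain ⟨l', hl'⟩ := ((h ⟨S, hSY⟩ B).1 hS).1 l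
    exact hk l' (R_trans n (R_symm n hl) hl')

end md

end Aux13

/-- for `n ≥ 1` (via the shift: `eqBairePlus n = =_{ℕ^ℕ}^{(n+1)+}`,
`SigmaLevel (Md ι ar) (2*n+1) = Σ⁰_{2(n+1)}`), a countable family `{A i : i ∈ ℕ}` of
pairwise nonisomorphic structures is `=_{ℕ^ℕ}^{(n+1)+}`-learnable iff any two of its
members are separated (up to isomorphism) by a `Σ⁰_{2(n+1)}` set. -/
theorem stmt_13 {ι : Type} [Countable ι] (ar : ι → ℕ) (har : ∃ i, 2 ≤ ar i) (n : ℕ)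
    (A : ℕ → Md ι ar) (hA : ∀ i j, i ≠ j → ¬ Iso (A i) (A j)) :
    Learnable (eqBairePlus n) (Set.range A) ↔
      ∀ i j, i ≠ j → ∃ C ∈ SigmaLevel (Md ι ar) (2 * n + 1),
        ((∀ S, Iso S (A i) → S ∈ C) ∧ (∀ S, Iso S (A j) → S ∉ C)) ∨
        ((∀ S, Iso S (A j) → S ∈ C) ∧ (∀ S, Iso S (A i) → S ∉ C)) := by
  rw [Aux13.eqBaire_eq]
  constructor
  · rintro ⟨Γ, hΓ, h⟩ i j hij
    have hY : ∀ S B, Iso S B → B ∈ LearnDom (Set.range A) → S ∈ LearnDom (Set.range A) := by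
      rintro S B hSB ⟨T, hT, hBT⟩
      exact ⟨T, hT, Aux13.iso_trans hSB hBT⟩
    have hm : ∀ i, A i ∈ LearnDom (Set.range A) := fun i => ⟨A i, ⟨i, rfl⟩, Aux13.iso_refl _⟩
    have hn : ¬ Aux13.R (n + 1) (Γ ⟨A i, hm i⟩) (Γ ⟨A j, hm j⟩) :=
      fun hR => hA i j hij ((h ⟨A i, hm i⟩ ⟨A j, hm j⟩).2 hR)
    have hcases : (∃ k, ∀ l, ¬ Aux13.R n (Γ ⟨A i, hm i⟩ k) (Γ ⟨A j, hm j⟩ l)) ∨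
        (∃ k, ∀ l, ¬ Aux13.R n (Γ ⟨A j, hm j⟩ k) (Γ ⟨A i, hm i⟩ l)) := by
      by_contra hcon
      push Not at hcon
      exact hn ⟨hcon.1, hcon.2⟩
    rcases hcases with hc | hc
    · obtain ⟨C, hC, h1⟩ := Aux13.forward n _ Γ hΓ h hY _ _ hc
      exact ⟨C, hC, Or.inl h1⟩
    · obtain ⟨C, hC, h1⟩ := Aux13.forward n _ Γ hΓ h hY _ _ hc
      exact ⟨C, hC, Or.inr h1⟩
  · intro h
    obtain ⟨a, b, hab⟩ := Aux13.code_all (X := Md ι ar) Aux13.md_zero n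
    have h' : ∀ i j, ∃ D ∈ SigmaLevel (Md ι ar) (2 * n + 1),
        (∀ S T, Iso S T → (S ∈ D ↔ T ∈ D)) ∧ (i ≠ j → ¬ (A i ∈ D ↔ A j ∈ D)) := by
      intro i j
      by_cases hij : i = j
      · exact ⟨∅, (Aux13.sig_both _).1, fun _ _ _ => Iff.rfl, fun hne => absurd hij hne⟩
      · obtain ⟨C, hC, hs⟩ := h i j hij
        obtain ⟨D, hD, hinv, hB⟩ := Aux13.invariant _ C hC
        refine ⟨D, hD, hinv, fun _ hiff => ?_⟩
        rcases hs with ⟨h1, h2⟩ | ⟨h1, h2⟩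
        · exact (hB (A j)).2 h2 (hiff.1 ((hB (A i)).1 h1))
        · exact (hB (A i)).2 h2 (hiff.2 ((hB (A j)).1 h1))
    choose D hD hinv hsep using h'
    choose g hg hg1 hg2 using fun i j => Aux13.code_sigma hab (D i j) (hD i j)
    have key : ∀ i j S T, Aux13.R (n + 1) (g i j S) (g i j T) ↔ (S ∈ D i j ↔ T ∈ D i j) := by
      intro i j S T
      have hne := Aux13.GG_HH a b hab.1
      by_cases hS : S ∈ D i j <;> by_cases hT : T ∈ D i j
      · simp only [hS, hT, iff_true]
        exact Aux13.R_trans _ (hg1 i j S hS) (Aux13.R_symm _ (hg1 i j T hT))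
      · simp only [hS, hT, iff_false, not_true]
        exact fun hR => hne (Aux13.R_trans _ (Aux13.R_symm _ (hg1 i j S hS))
          (Aux13.R_trans _ hR (hg2 i j T hT)))
      · simp only [hS, hT, false_iff, not_true, iff_false]
        exact fun hR => hne (Aux13.R_trans _ (Aux13.R_symm _ (hg1 i j T hT))
          (Aux13.R_trans _ (Aux13.R_symm _ hR) (hg2 i j S hS)))
      · simp only [hS, hT, iff_true]
        exact Aux13.R_trans _ (hg2 i j S hS) (Aux13.R_symm _ (hg2 i j T hT))
    refine ⟨fun S => Aux13.merge n fun k => g (Nat.unpair k).1 (Nat.unpair k).2 S.1,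
      Aux13.cont_merge n _ fun k => (hg _ _).comp continuous_subtype_val, ?_⟩
    rintro ⟨S, _, ⟨i, rfl⟩, hSi⟩ ⟨T, _, ⟨j, rfl⟩, hTj⟩
    rw [Aux13.R_merge]
    constructor
    · intro hST k
      exact (key _ _ _ _).2 (hinv _ _ _ _ hST)
    · intro hR
      by_cases hij : i = j
      · subst hij
        exact Aux13.iso_trans hSi (Aux13.iso_symm hTj)
      · have hk := hR (Nat.pair i j)
        simp only [Nat.unpair_pair] at hk
        have hk := (key _ _ _ _).1 hk
        rw [hinv i j _ _ hSi, hinv i j _ _ hTj] at hk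
        exact absurd hk (hsep i j hij)
end

section
/- For every n ≥ 1, the equivalence relation =_{ℕ^ℕ}^{n+} is compact for learning: a countable family K of pairwise nonisomorphic structures in Mod is =_{ℕ^ℕ}^{n+}-learnable if and only if for all distinct A, B ∈ K the pair {A, B} is =_{ℕ^ℕ}^{n+}-learnable. -/
open Set Filter Topology TopologicalSpace

/-- Generalized `Π⁰` classes (levels 1, 3, 5, ...). -/
def PC {X : Type*} [TopologicalSpace X] : ℕ → Set X → Prop
  | 0, C => IsClosed C
  | n + 1, C => ∃ D : ℕ → ℕ → Set X, (∀ j i, PC n (D j i)) ∧ C = ⋂ j, ⋃ i, D j i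

/-- Generalized `Σ⁰` classes (levels 2, 4, 6, ...). -/
def SC {X : Type*} [TopologicalSpace X] (n : ℕ) (V : Set X) : Prop :=
  ∃ D : ℕ → Set X, (∀ i, PC n (D i)) ∧ V = ⋃ i, D i

section classes
variable {X : Type*} [TopologicalSpace X]

lemma PC_succ_iff {n : ℕ} {C : Set X} :
    PC (n + 1) C ↔ ∃ V : ℕ → Set X, (∀ j, SC n (V j)) ∧ C = ⋂ j, V j := by
  constructor
  · rintro ⟨D, hD, rfl⟩
    exact ⟨fun j => ⋃ i, D j i, fun j => ⟨D j, hD j, rfl⟩, rfl⟩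
  · rintro ⟨V, hV, rfl⟩
    choose D hD hE using hV
    exact ⟨D, hD, by simp only [hE]⟩

lemma PC_empty (n : ℕ) : PC n (∅ : Set X) := by
  induction n with
  | zero => exact isClosed_empty
  | succ n ih => exact ⟨fun _ _ => ∅, fun _ _ => ih, by ext x; simp⟩

lemma PC_univ (n : ℕ) : PC n (univ : Set X) := by
  induction n with
  | zero => exact isClosed_univ
  | succ n ih => exact ⟨fun _ _ => univ, fun _ _ => ih, by ext x; simp⟩

lemma SC_iUnion {n : ℕ} {α : Type*} [Countable α] {C : α → Set X} (h : ∀ a, PC n (C a)) :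
    SC n (⋃ a, C a) := by
  rcases isEmpty_or_nonempty α with he | he
  · exact ⟨fun _ => ∅, fun _ => PC_empty n, by simp⟩
  · obtain ⟨e, he⟩ := exists_surjective_nat α
    exact ⟨fun k => C (e k), fun k => h _, (he.iUnion_comp C).symm⟩

lemma PC_iInter {n : ℕ} {α : Type*} [Countable α] {V : α → Set X} (h : ∀ a, SC n (V a)) :
    PC (n + 1) (⋂ a, V a) := by
  rcases isEmpty_or_nonempty α with he | he
  · simpa using PC_univ (n + 1)
  · obtain ⟨e, he⟩ := exists_surjective_nat α
    exact PC_succ_iff.2 ⟨fun k => V (e k), fun k => h _, (he.iInter_comp V).symm⟩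

lemma SC_inter_of {n : ℕ} (ih : ∀ C D : Set X, PC n C → PC n D → PC n (C ∩ D))
    {U V : Set X} (hU : SC n U) (hV : SC n V) : SC n (U ∩ V) := by
  obtain ⟨C, hC, rfl⟩ := hU
  obtain ⟨D, hD, rfl⟩ := hV
  have : (⋃ i, C i) ∩ (⋃ i, D i) = ⋃ p : ℕ × ℕ, C p.1 ∩ D p.2 := by
    ext x; simp
  rw [this]
  exact SC_iUnion fun p => ih _ _ (hC _) (hD _)

lemma PC_inter (n : ℕ) : ∀ C D : Set X, PC n C → PC n D → PC n (C ∩ D) := by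
  induction n with
  | zero => exact fun C D hC hD => IsClosed.inter hC hD
  | succ n ih =>
    intro C D hC hD
    obtain ⟨U, hU, rfl⟩ := PC_succ_iff.1 hC
    obtain ⟨V, hV, rfl⟩ := PC_succ_iff.1 hD
    rw [← iInter_inter_distrib]
    exact PC_iInter fun j => SC_inter_of ih (hU j) (hV j)

lemma SC_inter {n : ℕ} {U V : Set X} (hU : SC n U) (hV : SC n V) : SC n (U ∩ V) :=
  SC_inter_of (PC_inter n) hU hV

/-- decreasing representation -/
lemma PC_succ_anti {n : ℕ} {C : Set X} (h : PC (n + 1) C) :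
    ∃ V : ℕ → Set X, (∀ j, SC n (V j)) ∧ (∀ i j, i ≤ j → V j ⊆ V i) ∧ C = ⋂ j, V j := by
  obtain ⟨U, hU, rfl⟩ := PC_succ_iff.1 h
  refine ⟨fun j => ⋂ i ≤ j, U i, ?_, ?_, ?_⟩
  · intro j
    induction j with
    | zero => simpa using hU 0
    | succ j ih =>
      have : (⋂ i ≤ j + 1, U i) = (⋂ i ≤ j, U i) ∩ U (j + 1) := by
        ext x
        simp only [mem_iInter, mem_inter_iff]
        constructor
        · exact fun h => ⟨fun i hi => h i (by omega), h _ le_rfl⟩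
        · rintro ⟨h1, h2⟩ i hi
          rcases Nat.lt_or_ge j i with h | h
          · obtain rfl : i = j + 1 := by omega
            exact h2
          · exact h1 i h
      show SC n (⋂ i ≤ j + 1, U i)
      rw [this]
      exact SC_inter ih (hU _)
  · intro i j hij x hx
    simp only [mem_iInter] at hx ⊢
    exact fun k hk => hx k (hk.trans hij)
  · ext x
    simp only [mem_iInter]
    exact ⟨fun h j i _ => h i, fun h j => h j j le_rfl⟩

end classes

section vaught
variable {X G : Type*} [TopologicalSpace X] [TopologicalSpace G]

/-- Vaught `*`-transform. -/
def vstar (a : G → X → X) (C : Set X) (N : Set G) : Set X :=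
  {S | ∀ᶠ g in residual G, g ∈ N → a g S ∈ C}

lemma bm_of_PC {a : G → X → X} (ha : ∀ S, Continuous fun g => a g S) (S : X) (n : ℕ) :
    ∀ C : Set X, PC n C → BaireMeasurableSet {g | a g S ∈ C} := by
  induction n with
  | zero =>
    intro C hC
    have : IsClosed {g | a g S ∈ C} := IsClosed.preimage (ha S) hC
    exact this.isOpen_compl.baireMeasurableSet.of_compl
  | succ n ih =>
    rintro C ⟨D, hD, rfl⟩
    have : {g | a g S ∈ ⋂ j, ⋃ i, D j i} = ⋂ j, ⋃ i, {g | a g S ∈ D j i} := by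
      ext g; simp
    rw [this]
    exact .iInter fun j => .iUnion fun i => ih _ (hD j i)

lemma not_eventually_open [BaireSpace G] {N : Set G} (hN : IsOpen N) (hne : N.Nonempty) :
    ¬ ∀ᶠ g in residual G, g ∉ N := by
  intro h
  obtain ⟨g, hg, hg'⟩ := (dense_of_mem_residual h).inter_open_nonempty N hN hne
  exact hg' hg

lemma exists_basic [SecondCountableTopology G] {T : Set G} (hT : BaireMeasurableSet T)
    {N : Set G} (hN : IsOpen N) (h : ¬ ∀ᶠ g in residual G, g ∈ N → g ∉ T) :
    ∃ N' ∈ countableBasis G, N' ⊆ N ∧ ∀ᶠ g in residual G, g ∈ N' → g ∈ T := by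
  obtain ⟨u, hu, hTu⟩ := hT.residualEq_isOpen
  have hne : (N ∩ u).Nonempty := by
    by_contra hc
    rw [not_nonempty_iff_eq_empty] at hc
    apply h
    filter_upwards [hTu.mem_iff] with g hg hgN hgT
    exact (eq_empty_iff_forall_notMem.1 hc g) ⟨hgN, hg.1 hgT⟩
  obtain ⟨g, hg⟩ := hne
  obtain ⟨N', hN', hgN', hsub⟩ :=
    (isBasis_countableBasis G).exists_subset_of_mem_open hg (hN.inter hu)
  refine ⟨N', hN', fun x hx => (hsub hx).1, ?_⟩
  filter_upwards [hTu.mem_iff] with g hg hgN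
  exact hg.2 (hsub hgN).2

lemma star_iUnion [SecondCountableTopology G] [BaireSpace G] {a : G → X → X}
    (ha : ∀ S, Continuous fun g => a g S) {n : ℕ} {C : ℕ → Set X} (hC : ∀ i, PC n (C i))
    {N : Set G} (hN : IsOpen N) :
    vstar a (⋃ i, C i) N = ⋂ N' : {N' // N' ∈ countableBasis G ∧ N' ⊆ N},
      ⋃ p : ℕ × {N'' // N'' ∈ countableBasis G ∧ N'' ⊆ N'.1}, vstar a (C p.1) p.2.1 := by
  ext S
  simp only [mem_iInter, mem_iUnion]
  constructor
  · rintro hS ⟨N', hN', hsub⟩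
    have hopen := isOpen_of_mem_countableBasis hN'
    have : ∃ i, ¬ ∀ᶠ g in residual G, g ∈ N' → g ∉ {g | a g S ∈ C i} := by
      by_contra hc
      push Not at hc
      refine not_eventually_open hopen (nonempty_of_mem_countableBasis hN') ?_
      filter_upwards [eventually_countable_forall.2 hc, hS] with g h1 h2 h3
      obtain ⟨i, hi⟩ := mem_iUnion.1 (h2 (hsub h3))
      exact h1 i h3 hi
    obtain ⟨i, hi⟩ := this
    obtain ⟨N'', h1, h2, h3⟩ := exists_basic (bm_of_PC ha S n _ (hC i)) hopen hi
    exact ⟨(i, ⟨N'', h1, h2⟩), h3⟩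
  · intro h
    by_contra hS
    have hbm : BaireMeasurableSet {g | a g S ∈ ⋃ i, C i}ᶜ := by
      have : {g | a g S ∈ ⋃ i, C i} = ⋃ i, {g | a g S ∈ C i} := by ext g; simp
      rw [this]
      exact (BaireMeasurableSet.iUnion fun i => bm_of_PC ha S n _ (hC i)).compl
    obtain ⟨N', h1, h2, h3⟩ := exists_basic hbm hN (fun hc => hS (by
      show ∀ᶠ g in residual G, g ∈ N → a g S ∈ ⋃ i, C i
      filter_upwards [hc] with g h1 h2
      exact not_not.1 (h1 h2)))
    obtain ⟨⟨i, N'', h4, h5⟩, h6⟩ := h ⟨N', h1, h2⟩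
    refine not_eventually_open (isOpen_of_mem_countableBasis h4)
      (nonempty_of_mem_countableBasis h4) ?_
    have h6' : ∀ᶠ g in residual G, g ∈ N'' → a g S ∈ C i := h6
    filter_upwards [h3, h6'] with g h3 h6 hg
    exact h3 (h5 hg) (mem_iUnion.2 ⟨i, h6 hg⟩)

lemma PC_star [SecondCountableTopology G] [BaireSpace G] {a : G → X → X}
    (ha : ∀ S, Continuous fun g => a g S) (ha' : ∀ g, Continuous (a g)) (n : ℕ) :
    ∀ C : Set X, PC n C → ∀ N : Set G, IsOpen N → PC n (vstar a C N) := by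
  induction n with
  | zero =>
    intro C hC N hN
    have hC' : IsClosed C := hC
    have : vstar a C N = ⋂ g ∈ N, a g ⁻¹' C := by
      ext S
      simp only [mem_iInter, mem_preimage]
      constructor
      · intro hS g hg
        by_contra hgC
        refine not_eventually_open (N := N ∩ {g | a g S ∈ Cᶜ})
          (hN.inter (hC'.isOpen_compl.preimage (ha S))) ⟨g, hg, hgC⟩ ?_
        have hS' : ∀ᶠ g in residual G, g ∈ N → a g S ∈ C := hS
        filter_upwards [hS'] with g h1 h2
        exact h2.2 (h1 h2.1)
      · intro h
        show ∀ᶠ g in residual G, g ∈ N → a g S ∈ C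
        exact Eventually.of_forall fun g hg => h g hg
    rw [this]
    exact isClosed_biInter fun g _ => hC'.preimage (ha' g)
  | succ n ih =>
    rintro C ⟨D, hD, rfl⟩ N hN
    have : vstar a (⋂ j, ⋃ i, D j i) N = ⋂ j, vstar a (⋃ i, D j i) N := by
      ext S
      simp only [vstar, mem_ofPred_eq, mem_iInter]
      rw [← eventually_countable_forall]
      exact eventually_congr (Eventually.of_forall fun g => ⟨fun h j hg => h hg j, fun h hg j => h j hg⟩)
    rw [this]
    simp_rw [star_iUnion ha (hD _) hN]
    have hc : Countable (countableBasis G) := countable_countableBasis G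
    have hcc : ∀ M : Set G, Countable {N' // N' ∈ countableBasis G ∧ N' ⊆ M} := fun M =>
      ((countable_countableBasis G).mono (fun x (hx : x ∈ {x | x ∈ countableBasis G ∧ x ⊆ M}) => hx.1)).to_subtype
    have := hcc N
    have e : ∀ f : ℕ → {N' // N' ∈ countableBasis G ∧ N' ⊆ N} → Set X,
        (⋂ j, ⋂ M, f j M) = ⋂ q : ℕ × {N' // N' ∈ countableBasis G ∧ N' ⊆ N}, f q.1 q.2 := by
      intro f
      ext x
      simp only [mem_iInter, Prod.forall]
    rw [e]
    refine PC_iInter fun q => ?_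
    have := hcc q.2.1
    exact SC_iUnion fun p => ih _ (hD _ _) _ (isOpen_of_mem_countableBasis p.2.2.1)

/-- Vaught `Δ`-transform. -/
def vdelta (a : G → X → X) (V : Set X) : Set X :=
  {S | ¬ ∀ᶠ g in residual G, a g S ∉ V}

lemma SC_vdelta [SecondCountableTopology G] [BaireSpace G] {a : G → X → X}
    (ha : ∀ S, Continuous fun g => a g S) (ha' : ∀ g, Continuous (a g)) {n : ℕ}
    {V : Set X} (hV : SC n V) : SC n (vdelta a V) := by
  obtain ⟨C, hC, rfl⟩ := hV
  have hc : Countable (countableBasis G) := countable_countableBasis G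
  have : vdelta a (⋃ i, C i) = ⋃ p : ℕ × countableBasis G, vstar a (C p.1) p.2.1 := by
    ext S
    simp only [mem_iUnion]
    constructor
    · intro hS
      have : ∃ i, ¬ ∀ᶠ g in residual G, g ∈ univ → g ∉ {g | a g S ∈ C i} := by
        by_contra hc
        push Not at hc
        apply hS
        filter_upwards [eventually_countable_forall.2 hc] with g h1 h2
        obtain ⟨i, hi⟩ := mem_iUnion.1 h2
        exact h1 i trivial hi
      obtain ⟨i, hi⟩ := this
      obtain ⟨N'', h1, h2, h3⟩ := exists_basic (bm_of_PC ha S n _ (hC i)) isOpen_univ hi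
      exact ⟨(i, ⟨N'', h1⟩), h3⟩
    · rintro ⟨⟨i, N, hN⟩, h⟩ hS
      refine not_eventually_open (isOpen_of_mem_countableBasis hN)
        (nonempty_of_mem_countableBasis hN) ?_
      have h' : ∀ᶠ g in residual G, g ∈ N → a g S ∈ C i := h
      filter_upwards [h', hS] with g h1 h2 h3
      exact h2 (mem_iUnion.2 ⟨i, h1 h3⟩)
  rw [this]
  exact SC_iUnion fun p => PC_star ha ha' n _ (hC _) _ (isOpen_of_mem_countableBasis p.2.2)

end vaught

section towers

/-- Equality on Baire space, then its jumps. -/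
def Ep : (n : ℕ) → Tower n → Tower n → Prop
  | 0 => fun p q => p = q
  | n + 1 => eqBairePlus n

lemma Ep_succ (n : ℕ) (p q : ℕ → Tower n) :
    Ep (n + 1) p q ↔ (∀ k, ∃ l, Ep n (p k) (q l)) ∧ ∀ l, ∃ k, Ep n (q l) (p k) := by
  cases n <;> exact Iff.rfl

lemma Ep_refl (n : ℕ) : ∀ p, Ep n p p := by
  induction n with
  | zero => exact fun p => rfl
  | succ n ih => exact fun p => (Ep_succ n p p).2 ⟨fun k => ⟨k, ih _⟩, fun k => ⟨k, ih _⟩⟩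

lemma Ep_symm {n : ℕ} {p q : Tower n} (h : Ep n p q) : Ep n q p := by
  cases n with
  | zero => exact Eq.symm h
  | succ n => exact (Ep_succ n _ _).2 ((Ep_succ n _ _).1 h).symm

lemma Ep_trans (n : ℕ) : ∀ p q r, Ep n p q → Ep n q r → Ep n p r := by
  induction n with
  | zero => exact fun p q r h h' => Eq.trans h h'
  | succ n ih =>
    intro p q r h h'
    replace h := (Ep_succ n p q).1 h
    replace h' := (Ep_succ n q r).1 h'
    refine (Ep_succ n p r).2 ⟨?_, ?_⟩
    · intro k
      obtain ⟨l, hl⟩ := h.1 k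
      obtain ⟨m, hm⟩ := h'.1 l
      exact ⟨m, ih _ _ _ hl hm⟩
    · intro k
      obtain ⟨l, hl⟩ := h'.2 k
      obtain ⟨m, hm⟩ := h.2 l
      exact ⟨m, ih _ _ _ hl hm⟩

lemma Ep_otimes (n : ℕ) : ∀ i j (p q : Tower n),
    Ep n (otimes n i p) (otimes n j q) ↔ i = j ∧ Ep n p q := by
  induction n with
  | zero =>
    intro i j p q
    show (fun k => Nat.pair (p k) i) = (fun k => Nat.pair (q k) j) ↔ i = j ∧ p = q
    constructor
    · intro h
      have h' : ∀ k, p k = q k ∧ i = j := fun k => Nat.pair_eq_pair.1 (congrFun h k)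
      exact ⟨(h' 0).2, funext fun k => (h' k).1⟩
    · rintro ⟨rfl, rfl⟩; rfl
  | succ n ih =>
    intro i j p q
    refine (Ep_succ n (otimes (n + 1) i p) (otimes (n + 1) j q)).trans
      (Iff.trans ?_ (and_congr Iff.rfl (Ep_succ n p q).symm))
    simp only [otimes]
    simp only [ih]
    constructor
    · rintro ⟨h1, h2⟩
      obtain ⟨_, h, _⟩ := h1 0
      refine ⟨h, fun k => ?_, fun k => ?_⟩
      · obtain ⟨l, _, hl⟩ := h1 k
        exact ⟨l, hl⟩
      · obtain ⟨l, _, hl⟩ := h2 k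
        exact ⟨l, hl⟩
    · rintro ⟨rfl, h1, h2⟩
      refine ⟨fun k => ?_, fun k => ?_⟩
      · obtain ⟨l, hl⟩ := h1 k
        exact ⟨l, rfl, hl⟩
      · obtain ⟨l, hl⟩ := h2 k
        exact ⟨l, rfl, hl⟩

lemma continuous_otimes (n i : ℕ) : Continuous (otimes n i) := by
  induction n with
  | zero =>
    refine continuous_pi fun k => ?_
    exact (continuous_of_discreteTopology (f := fun m : ℕ => Nat.pair m i)).comp
      (continuous_apply (A := fun _ : ℕ => ℕ) k)
  | succ n ih =>
    refine continuous_pi fun k => ?_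
    exact ih.comp (continuous_apply (A := fun _ : ℕ => Tower n) k)

/-- Countable products coded into one element. -/
def tcode {n : ℕ} (p : ℕ → ℕ → Tower n) : ℕ → Tower n :=
  fun x => otimes n (Nat.unpair x).1 (p (Nat.unpair x).1 (Nat.unpair x).2)

lemma Ep_tcode {n : ℕ} (p q : ℕ → ℕ → Tower n) :
    Ep (n + 1) (tcode p) (tcode q) ↔ ∀ m, Ep (n + 1) (p m) (q m) := by
  have key : ∀ p q : ℕ → ℕ → Tower n, (∀ k, ∃ l, Ep n (tcode p k) (tcode q l)) ↔
      ∀ m k, ∃ l, Ep n (p m k) (q m l) := by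
    intro p q
    simp only [tcode, Ep_otimes]
    constructor
    · intro h m k
      obtain ⟨l, h1, h2⟩ := h (Nat.pair m k)
      simp only [Nat.unpair_pair] at h1 h2
      rw [← h1] at h2
      exact ⟨_, h2⟩
    · intro h x
      obtain ⟨l, hl⟩ := h (Nat.unpair x).1 (Nat.unpair x).2
      exact ⟨Nat.pair (Nat.unpair x).1 l, by simpa using hl⟩
  simp only [Ep_succ]
  rw [key p q, key q p]
  exact ⟨fun h m => ⟨h.1 m, h.2 m⟩, fun h => ⟨fun m => (h m).1, fun m => (h m).2⟩⟩

lemma continuous_tcode {X : Type*} [TopologicalSpace X] {n : ℕ} {f : ℕ → X → ℕ → Tower n}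
    (hf : ∀ m, Continuous (f m)) : Continuous fun x => tcode fun m => f m x := by
  refine continuous_pi fun k => ?_
  exact (continuous_otimes n _).comp ((continuous_apply _).comp (hf _))

/-- the `full` element -/
def Fel {n : ℕ} (t : Tower n) (tk : ℕ → Tower n) : ℕ → Tower n
  | 0 => t
  | k + 1 => tk k

lemma not_Ep_Fel {n : ℕ} {t : Tower n} {tk : ℕ → Tower n} (h : ∀ k, ¬ Ep n t (tk k)) :
    ¬ Ep (n + 1) (Fel t tk) tk := by
  intro h'
  obtain ⟨l, hl⟩ := ((Ep_succ _ _ _).1 h').1 0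
  exact h l hl

/-- `t, tk` reduce all `PC n` sets. -/
def Red (X : Type*) [TopologicalSpace X] (n : ℕ) (t : Tower n) (tk : ℕ → Tower n) : Prop :=
  (∀ k, ¬ Ep n t (tk k)) ∧ ∀ C : Set X, PC n C → ∃ g : X → Tower n, Continuous g ∧
    (∀ S ∈ C, Ep n (g S) t) ∧ ∀ S, S ∉ C → ∃ k, Ep n (g S) (tk k)

lemma Red_SC {X : Type*} [TopologicalSpace X] {n : ℕ} {t : Tower n} {tk : ℕ → Tower n}
    (h : Red X n t tk) {V : Set X} (hV : SC n V) :
    ∃ f : X → ℕ → Tower n, Continuous f ∧ (∀ S ∈ V, Ep (n + 1) (f S) (Fel t tk)) ∧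
      ∀ S, S ∉ V → Ep (n + 1) (f S) tk := by
  obtain ⟨C, hC, rfl⟩ := hV
  choose g hg h1 h2 using fun i => h.2 (C i) (hC i)
  let f : X → ℕ → Tower n := fun S x =>
    if (Nat.unpair x).1 = 0 then g (Nat.unpair x).2 S else tk (Nat.unpair x).2
  have f0 : ∀ S i, f S (Nat.pair 0 i) = g i S := by intro S i; simp [f]
  have f1 : ∀ S i, f S (Nat.pair 1 i) = tk i := by intro S i; simp [f]
  have fx : ∀ S x, f S x = g (Nat.unpair x).2 S ∨ f S x = tk (Nat.unpair x).2 := by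
    intro S x
    simp only [f]
    split_ifs
    · exact Or.inl rfl
    · exact Or.inr rfl
  refine ⟨f, ?_, ?_, ?_⟩
  · refine continuous_pi fun x => ?_
    by_cases hx : (Nat.unpair x).1 = 0
    · simp only [f, hx, if_true]; exact hg _
    · simp only [f, hx, if_false]; exact continuous_const
  · intro S hS
    obtain ⟨i, hi⟩ := mem_iUnion.1 hS
    refine (Ep_succ _ _ _).2 ⟨fun x => ?_, fun l => ?_⟩
    · rcases fx S x with e | e <;> rw [e]
      · by_cases hc : S ∈ C (Nat.unpair x).2
        · exact ⟨0, h1 _ S hc⟩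
        · obtain ⟨k, hk⟩ := h2 _ S hc
          exact ⟨k + 1, hk⟩
      · exact ⟨_ + 1, Ep_refl _ _⟩
    · cases l with
      | zero => exact ⟨Nat.pair 0 i, by rw [f0]; exact Ep_symm (h1 i S hi)⟩
      | succ k => exact ⟨Nat.pair 1 k, by rw [f1]; exact Ep_refl _ _⟩
  · intro S hS
    have hS' : ∀ i, S ∉ C i := fun i hi => hS (mem_iUnion.2 ⟨i, hi⟩)
    refine (Ep_succ _ _ _).2 ⟨fun x => ?_, fun l => ?_⟩
    · rcases fx S x with e | e <;> rw [e]
      · exact h2 _ S (hS' _)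
      · exact ⟨_, Ep_refl _ _⟩
    · exact ⟨Nat.pair 1 l, by rw [f1]; exact Ep_refl _ _⟩

open Classical in
lemma anti_pattern {X : Type*} {V : ℕ → Set X} (hV : ∀ i j, i ≤ j → V j ⊆ V i) {S : X}
    (hS : S ∉ ⋂ j, V j) : ∃ k, ∀ j, S ∈ V j ↔ j < k := by
  have hex : ∃ k, S ∉ V k := by simpa using hS
  refine ⟨Nat.find hex, fun j => ⟨fun h => ?_, fun h => ?_⟩⟩
  · by_contra hc
    exact Nat.find_spec hex (hV _ _ (not_lt.1 hc) h)
  · exact not_not.1 (Nat.find_min hex h)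

lemma Red_succ {X : Type*} [TopologicalSpace X] {n : ℕ} {t : Tower n} {tk : ℕ → Tower n}
    (h : Red X n t tk) : Red X (n + 1) (tcode fun _ => Fel t tk)
      (fun k => tcode fun j => if j < k then Fel t tk else tk) := by
  constructor
  · intro k hk
    have := (Ep_tcode _ _).1 hk k
    simp only [lt_irrefl, if_false] at this
    exact not_Ep_Fel h.1 this
  · intro C hC
    obtain ⟨V, hV, hanti, rfl⟩ := PC_succ_anti hC
    choose f hf h1 h2 using fun j => Red_SC h (hV j)
    refine ⟨fun S => tcode fun j => f j S, continuous_tcode hf, ?_, ?_⟩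
    · intro S hS
      exact (Ep_tcode _ _).2 fun m => h1 m S (mem_iInter.1 hS m)
    · intro S hS
      obtain ⟨k, hk⟩ := anti_pattern hanti hS
      refine ⟨k, (Ep_tcode _ _).2 fun m => ?_⟩
      by_cases hm : m < k
      · simp only [hm, if_true]; exact h1 m S ((hk m).2 hm)
      · simp only [hm, if_false]; exact h2 m S (fun hc => hm ((hk m).1 hc))

open Classical in
lemma Red_zero {X : Type*} [TopologicalSpace X]
    (hX : ∀ C : Set X, IsClosed C → ∃ D : ℕ → Set X, (∀ i, IsClopen (D i)) ∧ C = ⋂ i, D i) :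
    Red X 0 (fun _ => 0 : ℕ → ℕ) (fun k => (fun j => if j < k then 0 else 1 : ℕ → ℕ)) := by
  constructor
  · intro k hk
    have := congrFun (show (fun _ => 0 : ℕ → ℕ) = (fun j => if j < k then 0 else 1) from hk) k
    simp at this
  · intro C hC
    obtain ⟨D, hD, rfl⟩ := hX C hC
    let V : ℕ → Set X := fun j => ⋂ i ∈ Iic j, D i
    have hVc : ∀ j, IsClopen (V j) := fun j =>
      (finite_Iic j).isClopen_biInter fun i _ => hD i
    have hanti : ∀ i j, i ≤ j → V j ⊆ V i := fun i j hij =>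
      biInter_subset_biInter_left (Iic_subset_Iic.2 hij)
    have hVe : (⋂ i, D i) = ⋂ j, V j := by
      ext x
      simp only [V, mem_iInter, mem_Iic]
      exact ⟨fun h j i _ => h i, fun h j => h j j le_rfl⟩
    refine ⟨(fun S j => if S ∈ V j then 0 else 1 : X → ℕ → ℕ), ?_, ?_, ?_⟩
    · refine continuous_pi fun j => ?_
      refine continuous_const.if ?_ continuous_const
      intro a ha
      have : frontier (V j) = ∅ := (hVc j).frontier_eq
      exact absurd ha (by
        show a ∉ frontier (V j)
        simp [this])
    · intro S hS
      rw [hVe] at hS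
      exact funext fun j => if_pos (mem_iInter.1 hS j)
    · intro S hS
      rw [hVe] at hS
      obtain ⟨k, hk⟩ := anti_pattern hanti hS
      exact ⟨k, funext fun j => by simp [hk j]⟩

lemma exists_Red {X : Type*} [TopologicalSpace X]
    (hX : ∀ C : Set X, IsClosed C → ∃ D : ℕ → Set X, (∀ i, IsClopen (D i)) ∧ C = ⋂ i, D i)
    (n : ℕ) : ∃ t tk, Red X n t tk := by
  induction n with
  | zero => exact ⟨_, _, Red_zero hX⟩
  | succ n ih =>
    obtain ⟨t, tk, h⟩ := ih
    exact ⟨_, _, Red_succ h⟩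

/-- classes of `Ep n` are traces of `PC n` sets. -/
lemma trace_Ep {X : Type*} [TopologicalSpace X] {L : Set X} (n : ℕ) :
    ∀ (f : L → Tower n), Continuous f → ∀ x : Tower n,
      ∃ C : Set X, PC n C ∧ ∀ S : L, S.1 ∈ C ↔ Ep n (f S) x := by
  induction n with
  | zero =>
    intro f hf x
    have hf' : @Continuous L (ℕ → ℕ) _ _ f := hf
    have : IsClosed {S : L | (f S : ℕ → ℕ) = x}  :=
      @isClosed_eq (ℕ → ℕ) L _ _ _ _ _ hf' continuous_const
    obtain ⟨C, hC, hCe⟩ := isClosed_induced_iff.1 this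
    refine ⟨C, hC, fun S => ?_⟩
    exact Set.ext_iff.1 hCe S
  | succ n ih =>
    intro f hf x
    have hf' : @Continuous L (ℕ → Tower n) _ _ f := hf
    have hf'' : ∀ k, Continuous fun S => (f S : ℕ → Tower n) k := fun k =>
      (continuous_apply k).comp hf'
    choose C hC hCe using fun k l => ih (fun S => (f S : ℕ → Tower n) k) (hf'' k) ((x : ℕ → Tower n) l)
    refine ⟨(⋂ k, ⋃ l, C k l) ∩ (⋂ l, ⋃ k, C k l), ?_, ?_⟩
    · exact PC_inter _ _ _ (PC_iInter fun k => SC_iUnion fun l => hC k l)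
        (PC_iInter fun l => SC_iUnion fun k => hC k l)
    · intro S
      refine Iff.trans ?_ (Ep_succ n (f S) x).symm
      simp only [mem_inter_iff, mem_iInter, mem_iUnion, hCe]
      exact and_congr Iff.rfl
        (forall_congr' fun l => exists_congr fun k => ⟨Ep_symm, Ep_symm⟩)

end towers

section final

lemma Md_clopen {ι : Type} [Countable ι] (ar : ι → ℕ) (C : Set (Md ι ar)) (hC : IsClosed C) :
    ∃ D : ℕ → Set (Md ι ar), (∀ i, IsClopen (D i)) ∧ C = ⋂ i, D i := by
  have i1 : CompactSpace (Md ι ar) :=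
    inferInstanceAs (CompactSpace (∀ i : ι, (Fin (ar i) → ℕ) → Bool))
  have i2 : T2Space (Md ι ar) :=
    inferInstanceAs (T2Space (∀ i : ι, (Fin (ar i) → ℕ) → Bool))
  have i3 : TotallyDisconnectedSpace (Md ι ar) :=
    inferInstanceAs (TotallyDisconnectedSpace (∀ i : ι, (Fin (ar i) → ℕ) → Bool))
  have i4 : SecondCountableTopology (Md ι ar) :=
    inferInstanceAs (SecondCountableTopology (∀ i : ι, (Fin (ar i) → ℕ) → Bool))
  obtain ⟨T, hT, hTe⟩ := (isTopologicalBasis_isClopen (X := Md ι ar)).open_eq_sUnion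
    hC.isOpen_compl
  obtain ⟨T', hc, hsub, he⟩ := isOpen_sUnion_countable T fun s hs => (hT hs).isOpen
  rw [← he] at hTe
  have hne : (insert ∅ T').Nonempty := ⟨∅, mem_insert _ _⟩
  obtain ⟨e, hee⟩ := (hc.insert ∅).exists_eq_range hne
  have hcl : ∀ i, IsClopen (e i) := by
    intro i
    have : e i ∈ insert ∅ T' := hee ▸ mem_range_self i
    rcases this with h | h
    · rw [h]; exact isClopen_empty
    · exact hT (hsub h)
  refine ⟨fun i => (e i)ᶜ, fun i => (hcl i).compl, ?_⟩
  rw [← compl_iUnion, ← sUnion_range, ← hee, sUnion_insert, empty_union, ← hTe, compl_compl]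

/-- The group of permutations of ℕ with Polish topology. -/
def SInf : Set ((ℕ → ℕ) × (ℕ → ℕ)) := {p | ∀ x y, p.1 x = y ↔ p.2 y = x}

lemma SInf_closed : IsClosed SInf := by
  have : SInf = ⋂ x, ⋂ y, {p : (ℕ → ℕ) × (ℕ → ℕ) | p.1 x = y ↔ p.2 y = x} := by
    ext p; simp [SInf]
  rw [this]
  refine isClosed_iInter fun x => isClosed_iInter fun y => ?_
  have hc : Continuous fun p : (ℕ → ℕ) × (ℕ → ℕ) => (p.1 x, p.2 y) := by fun_prop
  exact (isClosed_discrete {q : ℕ × ℕ | q.1 = y ↔ q.2 = x}).preimage hc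

instance : PolishSpace SInf := SInf_closed.polishSpace

/-- The logic action. -/
def act {ι : Type} {ar : ι → ℕ} (g : SInf) (S : Md ι ar) : Md ι ar :=
  fun i v => S i (g.1.1 ∘ v)

lemma SInf_inv1 (g : SInf) (x : ℕ) : g.1.2 (g.1.1 x) = x := (g.2 x _).1 rfl
lemma SInf_inv2 (g : SInf) (x : ℕ) : g.1.1 (g.1.2 x) = x := (g.2 _ x).2 rfl

lemma SInf_bij (g : SInf) : Function.Bijective g.1.1 :=
  Function.bijective_iff_has_inverse.2 ⟨g.1.2, SInf_inv1 g, SInf_inv2 g⟩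

lemma act_cont1 {ι : Type} {ar : ι → ℕ} (S : Md ι ar) : Continuous fun g : SInf => act g S := by
  refine continuous_pi fun i => continuous_pi fun v => ?_
  have h : Continuous fun g : SInf => (g.1.1 ∘ v : Fin (ar i) → ℕ) := by
    refine continuous_pi fun k => ?_
    exact (continuous_apply (v k)).comp (continuous_fst.comp continuous_subtype_val)
  exact (continuous_of_discreteTopology (f := S i)).comp h

lemma act_cont2 {ι : Type} {ar : ι → ℕ} (g : SInf) :
    Continuous (act g : Md ι ar → Md ι ar) := by
  refine continuous_pi fun i => continuous_pi fun v => ?_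
  exact (continuous_apply (A := fun _ : Fin (ar i) → ℕ => Bool) (g.1.1 ∘ v)).comp
    (continuous_apply (A := fun i => (Fin (ar i) → ℕ) → Bool) i)

lemma act_iso {ι : Type} {ar : ι → ℕ} (g : SInf) (S : Md ι ar) : Iso (act g S) S :=
  ⟨g.1.1, SInf_bij g, fun _ _ => rfl⟩

lemma Iso_refl {ι : Type} {ar : ι → ℕ} (A : Md ι ar) : Iso A A :=
  ⟨id, Function.bijective_id, fun _ _ => rfl⟩

lemma Iso_symm {ι : Type} {ar : ι → ℕ} {A B : Md ι ar} (h : Iso A B) : Iso B A := by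
  obtain ⟨σ, hσ, h⟩ := h
  obtain ⟨τ, h1, h2⟩ := Function.bijective_iff_has_inverse.1 hσ
  refine ⟨τ, Function.bijective_iff_has_inverse.2 ⟨σ, h2, h1⟩, fun i v => ?_⟩
  rw [h]
  congr 1
  funext k
  exact (h2 _).symm

lemma Iso_trans {ι : Type} {ar : ι → ℕ} {A B C : Md ι ar} (h : Iso A B) (h' : Iso B C) :
    Iso A C := by
  obtain ⟨σ, hσ, h⟩ := h
  obtain ⟨τ, hτ, h'⟩ := h'
  exact ⟨τ ∘ σ, hτ.comp hσ, fun i v => by rw [h, h']; rfl⟩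

/-- Left multiplication. -/
def lmul (σ τ : ℕ → ℕ) (h1 : ∀ x, τ (σ x) = x) (h2 : ∀ x, σ (τ x) = x) (g : SInf) : SInf :=
  ⟨(fun x => σ (g.1.1 x), fun y => g.1.2 (τ y)), fun x y => by
    show σ (g.1.1 x) = y ↔ g.1.2 (τ y) = x
    rw [← g.2 x (τ y)]
    exact ⟨fun h => by rw [← h, h1], fun h => by rw [h, h2]⟩⟩

lemma lmul_cont (σ τ : ℕ → ℕ) (h1 : ∀ x, τ (σ x) = x) (h2 : ∀ x, σ (τ x) = x) :
    Continuous (lmul σ τ h1 h2) := by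
  refine Continuous.subtype_mk ?_ _
  refine Continuous.prodMk (continuous_pi fun x => ?_) (continuous_pi fun x => ?_)
  · exact (continuous_of_discreteTopology (f := σ)).comp
      ((continuous_apply x).comp (continuous_fst.comp continuous_subtype_val))
  · exact (continuous_apply (τ x)).comp (continuous_snd.comp continuous_subtype_val)

/-- Left multiplication as a homeomorphism. -/
def lmulHomeo (σ τ : ℕ → ℕ) (h1 : ∀ x, τ (σ x) = x) (h2 : ∀ x, σ (τ x) = x) : SInf ≃ₜ SInf where
  toFun := lmul σ τ h1 h2
  invFun := lmul τ σ h2 h1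
  left_inv g := by
    apply Subtype.ext
    simp only [lmul, h1]
  right_inv g := by
    apply Subtype.ext
    simp only [lmul, h2]
  continuous_toFun := lmul_cont _ _ _ _
  continuous_invFun := lmul_cont _ _ _ _

lemma vdelta_inv {ι : Type} {ar : ι → ℕ} {V : Set (Md ι ar)} {S S' : Md ι ar} (h : Iso S S')
    (hS : S ∈ vdelta (act (ι := ι) (ar := ar)) V) : S' ∈ vdelta (act (ι := ι) (ar := ar)) V := by
  obtain ⟨σ, hσ, h⟩ := h
  obtain ⟨τ, h1, h2⟩ := Function.bijective_iff_has_inverse.1 hσ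
  intro hc
  apply hS
  have hm := (lmulHomeo σ τ h1 h2).residual_map_eq
  rw [← hm, eventually_map] at hc
  filter_upwards [hc] with g hg
  have : act g S = act (lmulHomeo σ τ h1 h2 g) S' := by
    funext i v
    show S i (g.1.1 ∘ v) = _
    rw [h]; rfl
  rw [this]; exact hg

lemma exists_sep_aux {ι : Type} {ar : ι → ℕ} {n : ℕ} {A B : Md ι ar} {L : Set (Md ι ar)}
    (hL : ∀ S, Iso S A ∨ Iso S B → S ∈ L)
    {Γ : L → Tower (n + 1)} (hΓ : Continuous Γ)
    (hE : ∀ S S' : L, Iso S.1 S'.1 ↔ eqBairePlus n (Γ S) (Γ S')) (x : Tower n)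
    (hA : ∃ k, Ep n ((Γ ⟨A, hL _ (Or.inl (Iso_refl A))⟩ : ℕ → Tower n) k) x)
    (hB : ∀ k, ¬ Ep n ((Γ ⟨B, hL _ (Or.inr (Iso_refl B))⟩ : ℕ → Tower n) k) x) :
    ∃ W : Set (Md ι ar), SC n W ∧ (∀ S S', Iso S S' → S ∈ W → S' ∈ W) ∧ A ∈ W ∧ B ∉ W := by
  have hΓ' : @Continuous L (ℕ → Tower n) _ _ Γ := hΓ
  have hk : ∀ k, Continuous fun S => (Γ S : ℕ → Tower n) k := fun k =>
    (continuous_apply k).comp hΓ'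
  choose C hC hCe using fun k => trace_Ep n (fun S => (Γ S : ℕ → Tower n) k) (hk k) x
  have hVA : ∀ S, Iso S A → S ∈ ⋃ k, C k := by
    intro S hS
    obtain ⟨k, hk⟩ := hA
    have := (hE ⟨S, hL _ (Or.inl hS)⟩ ⟨A, hL _ (Or.inl (Iso_refl A))⟩).1 hS
    obtain ⟨l, hl⟩ := ((Ep_succ n _ _).1 this).2 k
    exact mem_iUnion.2 ⟨l, (hCe l ⟨S, hL _ (Or.inl hS)⟩).2
      (Ep_trans n _ _ _ (Ep_symm hl) hk)⟩
  have hVB : ∀ S, Iso S B → S ∉ ⋃ k, C k := by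
    intro S hS hc
    obtain ⟨k, hk⟩ := mem_iUnion.1 hc
    have hk' := (hCe k ⟨S, hL _ (Or.inr hS)⟩).1 hk
    have := (hE ⟨S, hL _ (Or.inr hS)⟩ ⟨B, hL _ (Or.inr (Iso_refl B))⟩).1 hS
    obtain ⟨l, hl⟩ := ((Ep_succ n _ _).1 this).1 k
    exact hB l (Ep_trans n _ _ _ (Ep_symm hl) hk')
  refine ⟨vdelta (act (ι := ι) (ar := ar)) (⋃ k, C k),
    SC_vdelta act_cont1 act_cont2 ⟨C, hC, rfl⟩, fun S S' h => vdelta_inv h, ?_, ?_⟩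
  · intro hc
    refine not_eventually_open (G := SInf) isOpen_univ ⟨⟨(id, id), fun x y => eq_comm⟩, trivial⟩ ?_
    filter_upwards [hc] with g hg
    exact absurd (hVA _ (act_iso g A)) hg
  · intro hc
    exact hc (Eventually.of_forall fun g => hVB _ (act_iso g B))

lemma exists_sep {ι : Type} {ar : ι → ℕ} {n : ℕ} {A B : Md ι ar} (hAB : ¬ Iso A B)
    (h : Learnable (eqBairePlus n) ({A, B} : Set (Md ι ar))) :
    ∃ W : Set (Md ι ar), SC n W ∧ (∀ S S', Iso S S' → S ∈ W → S' ∈ W) ∧ ¬ (A ∈ W ↔ B ∈ W) := by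
  obtain ⟨Γ, hΓ, hE⟩ := h
  have hL : ∀ S, Iso S A ∨ Iso S B → S ∈ LearnDom ({A, B} : Set (Md ι ar)) := by
    rintro S (h | h)
    · exact ⟨A, by simp, h⟩
    · exact ⟨B, by simp, h⟩
  have hne := mt (hE ⟨A, hL _ (Or.inl (Iso_refl A))⟩ ⟨B, hL _ (Or.inr (Iso_refl B))⟩).2 hAB
  have hne' := mt (Ep_succ n _ _).2 hne
  rw [not_and_or] at hne'
  rcases hne' with h | h
  · push Not at h
    obtain ⟨k, hk⟩ := h
    obtain ⟨W, h1, h2, h3, h4⟩ := exists_sep_aux hL hΓ hE _ ⟨k, Ep_refl _ _⟩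
      (fun l hl => hk l (Ep_symm hl))
    exact ⟨W, h1, h2, fun h => h4 (h.1 h3)⟩
  · push Not at h
    obtain ⟨k, hk⟩ := h
    obtain ⟨W, h1, h2, h3, h4⟩ := exists_sep_aux (fun S h => hL S h.symm) hΓ hE _
      ⟨k, Ep_refl _ _⟩ (fun l hl => hk l (Ep_symm hl))
    exact ⟨W, h1, h2, fun h => h4 (h.2 h3)⟩

end final

/-- for every `n ≥ 1` (via the shift `eqBairePlus n = =_{ℕ^ℕ}^{(n+1)+}`),
`=_{ℕ^ℕ}^{(n+1)+}` is compact for learning: a countable family of pairwise nonisomorphic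
structures is learnable iff each of its two-element subfamilies is. -/
theorem stmt_14 {ι : Type} [Countable ι] (ar : ι → ℕ) (har : ∃ i, 2 ≤ ar i) (n : ℕ)
    (K : Set (Md ι ar)) (hK : GoodFamily K) :
    Learnable (eqBairePlus n) K ↔
      ∀ A ∈ K, ∀ B ∈ K, A ≠ B → Learnable (eqBairePlus n) ({A, B} : Set (Md ι ar)) := by
  constructor
  · rintro ⟨Γ, hΓ, hE⟩ A hA B hB _
    have hsub : LearnDom ({A, B} : Set (Md ι ar)) ⊆ LearnDom K := by
      rintro S ⟨C, hC, h⟩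
      rcases hC with rfl | rfl
      · exact ⟨_, hA, h⟩
      · exact ⟨_, hB, h⟩
    exact ⟨fun S => Γ (Set.inclusion hsub S), hΓ.comp (continuous_inclusion hsub),
      fun S S' => hE (Set.inclusion hsub S) (Set.inclusion hsub S')⟩
  · intro hpair
    obtain ⟨t, tk, hred⟩ := exists_Red (Md_clopen ar) n
    have hsep : ∀ p : K × K, ∃ W : Set (Md ι ar), SC n W ∧
        (∀ S S', Iso S S' → S ∈ W → S' ∈ W) ∧ (p.1.1 ≠ p.2.1 → ¬ (p.1.1 ∈ W ↔ p.2.1 ∈ W)) := by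
      intro p
      by_cases hp : p.1.1 = p.2.1
      · exact ⟨∅, ⟨fun _ => ∅, fun _ => PC_empty n, by simp⟩, fun _ _ _ h => h,
          fun h => absurd hp h⟩
      · obtain ⟨W, h1, h2, h3⟩ := exists_sep (hK.2 _ p.1.2 _ p.2.2 hp)
          (hpair _ p.1.2 _ p.2.2 hp)
        exact ⟨W, h1, h2, fun _ => h3⟩
    choose W hW1 hW2 hW3 using hsep
    choose f hf hf1 hf2 using fun p => Red_SC hred (hW1 p)
    rcases K.eq_empty_or_nonempty with rfl | ⟨A0, hA0⟩
    · refine ⟨fun _ => tk, continuous_const, ?_⟩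
      rintro ⟨S, A, hA, _⟩
      exact absurd hA (Set.notMem_empty A)
    have := hK.1.to_subtype
    have : Nonempty (K × K) := ⟨(⟨A0, hA0⟩, ⟨A0, hA0⟩)⟩
    obtain ⟨e, he⟩ := exists_surjective_nat (K × K)
    have hΓ : Continuous fun S : Md ι ar => tcode fun m => f (e m) S :=
      continuous_tcode fun m => hf (e m)
    have hne := not_Ep_Fel hred.1
    refine ⟨fun S => tcode fun m => f (e m) S.1, hΓ.comp continuous_subtype_val, fun S S' => ?_⟩
    refine Iff.trans ?_ (Ep_tcode (fun m => f (e m) S.1) (fun m => f (e m) S'.1)).symm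
    constructor
    · intro hiso m
      by_cases h : S.1 ∈ W (e m)
      · exact Ep_trans _ _ _ _ (hf1 _ _ h) (Ep_symm (hf1 _ _ (hW2 _ _ _ hiso h)))
      · exact Ep_trans _ _ _ _ (hf2 _ _ h)
          (Ep_symm (hf2 _ _ fun h' => h (hW2 _ _ _ (Iso_symm hiso) h')))
    · intro h
      obtain ⟨A, hA, hSA⟩ := S.2
      obtain ⟨B, hB, hSB⟩ := S'.2
      by_cases hAB : A = B
      · subst hAB
        exact Iso_trans hSA (Iso_symm hSB)
      exfalso
      obtain ⟨m, hm⟩ := he (⟨A, hA⟩, ⟨B, hB⟩)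
      have hmm := h m
      rw [hm] at hmm
      have hw := hW3 (⟨A, hA⟩, ⟨B, hB⟩) hAB
      have hi := hW2 (⟨A, hA⟩, ⟨B, hB⟩)
      apply hw
      constructor
      · intro hAW
        by_contra hBW
        have h1 := hf1 _ _ (hi _ _ (Iso_symm hSA) hAW)
        have h2 := hf2 _ _ (fun hc => hBW (hi _ _ hSB hc))
        exact hne (Ep_trans _ _ _ _ (Ep_symm h1) (Ep_trans _ _ _ _ hmm h2))
      · intro hBW
        by_contra hAW
        have h1 := hf1 _ _ (hi _ _ (Iso_symm hSB) hBW)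
        have h2 := hf2 _ _ (fun hc => hAW (hi _ _ hSA hc))
        exact hne (Ep_trans _ _ _ _ (Ep_symm h1) (Ep_trans _ _ _ _ (Ep_symm hmm) h2))
end

section
/- Let E be an equivalence relation on a topological space X and F an equivalence relation on a topological space Y. If E is compact for learning and F is not learn-reducible to E, then there exist nonisomorphic structures A, B ∈ Mod such that the pair {A, B} is F-learnable and not E-learnable. -/
/-- if `E` is compact for learning and `F` is not learn-reducible to `E`,
then some pair of nonisomorphic structures is `F`-learnable but not `E`-learnable. -/
theorem stmt_16 {ι : Type} [Countable ι] (ar : ι → ℕ)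
    {X Y : Type*} [TopologicalSpace X] [TopologicalSpace Y]
    (E : X → X → Prop) (F : Y → Y → Prop) (hE : Equivalence E) (hF : Equivalence F)
    (hcomp : CompactForLearning ι ar E) (hred : ¬ LearnRed ι ar F E) :
    ∃ A B : Md ι ar, ¬ Iso A B ∧
      Learnable F ({A, B} : Set (Md ι ar)) ∧
      ¬ Learnable E ({A, B} : Set (Md ι ar)) := by
  unfold LearnRed at hred
  push Not at hred
  obtain ⟨K, hK, hF', hE'⟩ := hred
  rw [hcomp K hK] at hE'
  push Not at hE'
  obtain ⟨A, hA, B, hB, hne, hL⟩ := hE'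
  refine ⟨A, B, hK.2 A hA B hB hne, ?_, hL⟩
  obtain ⟨Γ, hc, hΓ⟩ := hF'
  have hsub : LearnDom ({A, B} : Set (Md ι ar)) ⊆ LearnDom K := by
    rintro S ⟨C, hC, hS⟩
    refine ⟨C, ?_, hS⟩
    rcases hC with rfl | rfl
    · exact hA
    · exact hB
  exact ⟨fun S => Γ (Set.inclusion hsub S), hc.comp (continuous_inclusion hsub),
    fun S S' => hΓ (Set.inclusion hsub S) (Set.inclusion hsub S')⟩
end

section
/- Let E be an equivalence relation on ℕ → ℕ which, as a subset of (ℕ → ℕ) × (ℕ → ℕ) with the product topology, belongs to Σ⁰_2, and suppose E has uncountably many equivalence classes (the quotient of ℕ → ℕ by E is uncountable). Then E^+ and =_{ℕ^ℕ}^+ are learn-equivalent: a countable family K of pairwise nonisomorphic structures in Mod is E^+-learnable if and only if it is =_{ℕ^ℕ}^+-learnable. -/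
open Topology Filter in
lemma aux_g (C : Set (ℕ → ℕ)) (hC : IsClosed C) (a : ℕ → ℕ) (Q : Set (ℕ → ℕ))
    (ha : a ∈ closure Q) :
    ∃ g : (ℕ → ℕ) → (ℕ → ℕ), Continuous g ∧ (∀ x ∈ C, g x = a) ∧ ∀ x, x ∉ C → g x ∈ Q := by
  classical
  obtain ⟨s, hsQ, hs⟩ := mem_closure_iff_seq_limit.1 ha
  have hex : ∀ x, x ∉ C → ∃ m, Disjoint C (PiNat.cylinder x m) := by
    intro x hx
    exact PiNat.exists_disjoint_cylinder hC hx
  let g : (ℕ → ℕ) → (ℕ → ℕ) := fun x => if h : x ∈ C then a else s (Nat.find (hex x h))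
  have hcyl : ∀ (x : ℕ → ℕ) n, PiNat.cylinder x n ∈ 𝓝 x := fun x n =>
    (PiNat.isOpen_cylinder _ x n).mem_nhds (PiNat.self_mem_cylinder x n)
  refine ⟨g, ?_, fun x hx => by simp [g, hx], fun x hx => by simp [g, hx, hsQ]⟩
  rw [continuous_iff_continuousAt]
  intro x
  by_cases hx : x ∈ C
  · have hgx : g x = a := by simp [g, hx]
    unfold ContinuousAt
    rw [hgx]
    intro U hU
    obtain ⟨M, hM⟩ := (mem_atTop_sets.1 (hs hU))
    refine Filter.mem_map.2 (Filter.mem_of_superset (hcyl x M) ?_)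
    intro y hy
    show g y ∈ U
    by_cases hyC : y ∈ C
    · simp only [g, hyC, dif_pos]; exact mem_of_mem_nhds hU
    · simp only [g, hyC, dif_neg, not_false_eq_true]
      apply hM
      by_contra hlt
      push Not at hlt
      have h1 := Nat.find_spec (hex y hyC)
      refine Set.disjoint_left.1 h1 hx ?_
      rw [PiNat.mem_cylinder_comm]
      exact PiNat.cylinder_anti x hlt.le hy
  · have : g =ᶠ[𝓝 x] fun _ => g x := by
      refine Filter.mem_of_superset (hcyl x (Nat.find (hex x hx))) ?_
      intro y hy
      show g y = g x
      have hd := Nat.find_spec (hex x hx)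
      have hyC : y ∉ C := fun h => Set.disjoint_left.1 hd h hy
      have he : ∀ k ≤ Nat.find (hex x hx), PiNat.cylinder y k = PiNat.cylinder x k :=
        fun k hk => PiNat.mem_cylinder_iff_eq.1 (PiNat.cylinder_anti x hk hy)
      have : Nat.find (hex y hyC) = Nat.find (hex x hx) := by
        rw [Nat.find_eq_iff]
        refine ⟨by rw [he _ le_rfl]; exact hd, fun n hn => ?_⟩
        rw [he _ hn.le]
        exact Nat.find_min (hex x hx) hn
      simp only [g, hx, hyC, dif_neg, not_false_eq_true, this]
    exact continuousAt_const.congr this.symm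

lemma aux_pts (F : (ℕ → ℕ) → (ℕ → ℕ) → Prop) (hF : Equivalence F)
    (hu : ¬ Countable (Quot F)) :
    ∃ a q : ℕ → (ℕ → ℕ), (∀ i j, F (a i) (a j) → i = j) ∧ (∀ i j, ¬ F (a i) (q j)) ∧
      ∀ i, a i ∈ closure (Set.range q) := by
  let T : Set (ℕ → ℕ) := Set.range (Quot.out : Quot F → _)
  have hinj : ∀ x ∈ T, ∀ y ∈ T, F x y → x = y := by
    rintro _ ⟨u, rfl⟩ _ ⟨v, rfl⟩ h
    have := Quot.sound h
    rw [Quot.out_eq, Quot.out_eq] at this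
    rw [this]
  have hT : ¬ T.Countable := by
    intro h
    apply hu
    have : Function.Injective (Quot.out : Quot F → _) := fun u v h => by
      rw [← Quot.out_eq u, ← Quot.out_eq v, h]
    have h2 := h.to_subtype
    exact (Set.rangeFactorization_injective.2 this).countable
  obtain ⟨D, hDc, hDd⟩ := TopologicalSpace.exists_countable_dense T
  let Q : Set (ℕ → ℕ) := Subtype.val '' D
  have hQc : Q.Countable := hDc.image _
  have hTQ : (T \ Q).Infinite := by
    intro h
    apply hT
    exact (h.countable.union hQc).mono (by intro x hx; by_cases h : x ∈ Q <;> simp [*])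
  have hcl : ∀ x ∈ T, x ∈ closure Q := by
    intro x hx
    have := hDd ⟨x, hx⟩
    rw [closure_subtype] at this
    exact this
  have hQne : Q.Nonempty := by
    obtain ⟨x, hx⟩ := hTQ.nonempty
    exact closure_nonempty_iff.1 ⟨x, hcl x hx.1⟩
  obtain ⟨q, hq⟩ := hQc.exists_eq_range hQne
  let a := hTQ.natEmbedding
  have hQT : Q ⊆ T := by rintro _ ⟨y, _, rfl⟩; exact y.2
  refine ⟨fun i => a i, q, ?_, ?_, ?_⟩
  · intro i j h
    exact a.injective (Subtype.ext (hinj _ (a i).2.1 _ (a j).2.1 h))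
  · intro i j h
    have hj : q j ∈ Q := hq ▸ Set.mem_range_self j
    have := hinj _ (a i).2.1 _ (hQT hj) h
    exact (a i).2.2 (this ▸ hj)
  · intro i
    rw [← hq]
    exact hcl _ (a i).2.1

lemma aux_red {ι : Type} (ar : ι → ℕ)
    (E F : (ℕ → ℕ) → (ℕ → ℕ) → Prop) (hE : Equivalence E) (hF : Equivalence F)
    (hS : ∀ z, ∃ C : ℕ → Set (ℕ → ℕ), (∀ n, IsClosed (C n)) ∧ ∀ x, E x z ↔ ∃ n, x ∈ C n)
    (hu : ¬ Countable (Quot F)) (K : Set (Md ι ar)) (hK : GoodFamily K)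
    (hL : Learnable (FSJump E) K) : Learnable (FSJump F) K := by
  obtain ⟨Γ, hΓ, hΓi⟩ := hL
  rcases K.eq_empty_or_nonempty with rfl | hne
  · have he : IsEmpty (LearnDom (∅ : Set (Md ι ar))) := by
      constructor; rintro ⟨S, A, hA, _⟩; exact hA
    exact ⟨fun _ _ => 0, continuous_const, fun S => (he.false S).elim⟩
  obtain ⟨A, hA⟩ := hK.1.exists_eq_range hne
  have hself : ∀ i, A i ∈ LearnDom K := fun i =>
    ⟨A i, hA ▸ Set.mem_range_self i, id, Function.bijective_id, fun _ _ => rfl⟩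
  let z : ℕ → (ℕ → ℕ) := fun j => Γ ⟨A j.unpair.1, hself _⟩ j.unpair.2
  obtain ⟨a, q, haa, haq, hac⟩ := aux_pts F hF hu
  choose C hCc hC using fun j => hS (z j)
  choose g hgc hg1 hg2 using fun j n => aux_g (C j n) (hCc j n) (a j) _ (hac j)
  let I := ℕ ⊕ (ℕ × ℕ × ℕ)
  let e : ℕ ≃ I := (Denumerable.eqv I).symm
  let G : LearnDom K → I → (ℕ → ℕ) := fun S i =>
    Sum.elim q (fun t => g t.1 t.2.1 (Γ S t.2.2)) i
  let P : ℕ → LearnDom K → Prop := fun j S => ∃ k, E (Γ S k) (z j)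
  have hG : ∀ S i, G S i ∈ Set.range q ∨ ∃ j, P j S ∧ G S i = a j := by
    rintro S (m | ⟨j, n, k⟩)
    · exact Or.inl ⟨m, rfl⟩
    · by_cases h : Γ S k ∈ C j n
      · exact Or.inr ⟨j, ⟨k, (hC j _).2 ⟨n, h⟩⟩, hg1 j n _ h⟩
      · exact Or.inl (hg2 j n _ h)
  have hG2 : ∀ S j, P j S → ∃ i, G S i = a j := by
    rintro S j ⟨k, hk⟩
    obtain ⟨n, hn⟩ := (hC j _).1 hk
    exact ⟨Sum.inr (j, n, k), hg1 j n _ hn⟩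
  have half : ∀ S S', (∀ j, P j S → P j S') ↔ ∀ i, ∃ i', F (G S i) (G S' i') := by
    intro S S'
    constructor
    · intro h i
      rcases hG S i with ⟨m, hm⟩ | ⟨j, hj, hi⟩
      · exact ⟨Sum.inl m, by rw [← hm]; exact hF.refl _⟩
      · obtain ⟨i', hi'⟩ := hG2 S' j (h j hj)
        exact ⟨i', by rw [hi, hi']; exact hF.refl _⟩
    · intro h j hj
      obtain ⟨i, hi⟩ := hG2 S j hj
      obtain ⟨i', hi'⟩ := h i
      rw [hi] at hi'
      rcases hG S' i' with ⟨m, hm⟩ | ⟨j', hj', hi2⟩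
      · rw [← hm] at hi'; exact (haq _ _ hi').elim
      · rw [hi2] at hi'
        rw [haa _ _ hi']; exact hj'
  have half2 : ∀ S S', (∀ j, P j S → P j S') ↔ ∀ k, ∃ l, E (Γ S k) (Γ S' l) := by
    intro S S'
    constructor
    · intro h k
      obtain ⟨B, hB, hSB⟩ := S.2
      rw [hA] at hB
      obtain ⟨i, rfl⟩ := hB
      obtain ⟨l, hl⟩ := ((hΓi S ⟨A i, hself i⟩).1 hSB).1 k
      have hz : z (Nat.pair i l) = Γ ⟨A i, hself i⟩ l := by
        simp only [z, Nat.unpair_pair]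
      rw [← hz] at hl
      obtain ⟨k', hk'⟩ := h _ ⟨k, hl⟩
      exact ⟨k', hE.trans hl (hE.symm hk')⟩
    · rintro h j ⟨k, hk⟩
      obtain ⟨l, hl⟩ := h k
      exact ⟨l, hE.trans (hE.symm hl) hk⟩
  refine ⟨fun S n => G S (e n), ?_, ?_⟩
  · refine continuous_pi fun n => ?_
    rcases hn : e n with m | ⟨j, n, k⟩
    · exact continuous_const
    · exact (hgc j n).comp ((continuous_apply k).comp hΓ)
  · intro S S'
    rw [hΓi]
    have key : ∀ S S', (∀ k, ∃ l, E (Γ S k) (Γ S' l)) ↔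
        ∀ k, ∃ l, F (G S (e k)) (G S' (e l)) := by
      intro S S'
      rw [← half2, half, e.forall_congr_left]
      simp only [e.exists_congr_left, Equiv.apply_symm_apply]
    unfold FSJump
    rw [key S S', key S' S]

/-- if `E` is a `Σ⁰_2` (here `SigmaLevel _ 1`) equivalence relation on
`ℕ → ℕ` with uncountably many classes, then `E⁺` and `=_{ℕ^ℕ}^+` are learn-equivalent. -/
theorem stmt_17 {ι : Type} [Countable ι] (ar : ι → ℕ) (har : ∃ i, 2 ≤ ar i)
    (E : (ℕ → ℕ) → (ℕ → ℕ) → Prop) (hE : Equivalence E)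
    (hSigma : {x : (ℕ → ℕ) × (ℕ → ℕ) | E x.1 x.2} ∈
      SigmaLevel ((ℕ → ℕ) × (ℕ → ℕ)) 1)
    (huncount : ¬ Countable (Quot E)) :
    ∀ K : Set (Md ι ar), GoodFamily K →
      (Learnable (FSJump E) K ↔
        Learnable (FSJump (· = · : (ℕ → ℕ) → (ℕ → ℕ) → Prop)) K) := by
  intro K hK
  constructor
  · refine aux_red ar E _ hE ⟨fun _ => rfl, Eq.symm, Eq.trans⟩ ?_ ?_ K hK
    · obtain ⟨A, hA, hEA⟩ := hSigma
      intro z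
      refine ⟨fun n => {x | (x, z) ∈ (A n)ᶜ}, fun n => ?_, fun x => ?_⟩
      · have h : IsOpen (A n) := hA n
        exact h.isClosed_compl.preimage (by fun_prop : Continuous fun x : ℕ → ℕ => (x, z))
      · have : (x, z) ∈ {x : (ℕ → ℕ) × (ℕ → ℕ) | E x.1 x.2} ↔ (x, z) ∈ ⋃ i, (A i)ᶜ := by rw [hEA]
        simpa using this
    · intro h
      apply huncount
      have hi : Function.Injective (Quot.mk (· = · : (ℕ → ℕ) → (ℕ → ℕ) → Prop)) := by
        intro x y hxy
        exact congrArg (Quot.lift id (fun _ _ h => h)) hxy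
      have : Countable (ℕ → ℕ) := hi.countable
      infer_instance
  · refine aux_red ar _ E ⟨fun _ => rfl, Eq.symm, Eq.trans⟩ hE ?_ huncount K hK
    intro z
    exact ⟨fun _ => {z}, fun _ => isClosed_singleton, fun x => by simp⟩
end

section
/- Let E be an equivalence relation on ℕ → ℕ which, as a subset of (ℕ → ℕ) × (ℕ → ℕ) with the product topology, belongs to Σ⁰_2. Then every E^+-learnable countable family of pairwise nonisomorphic structures in Mod is =_{ℕ^ℕ}^+-learnable. -/
open Classical in
noncomputable def wit (D : Set (ℕ → ℕ)) (z : ℕ → ℕ) : ℕ → ℕ :=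
  fun m => if ∃ d ∈ D, ∀ k < m, d k = z k then 0 else 1

def stp (k : ℕ) : ℕ → ℕ := fun m => if m < k then 0 else 1

def tagg (n : ℕ) (g : ℕ → ℕ) : ℕ → ℕ := fun m => Nat.pair n (g m)

theorem tagg_inj {n n' : ℕ} {g g' : ℕ → ℕ} (h : tagg n g = tagg n' g') : n = n' ∧ g = g' := by
  have h1 : ∀ m, n = n' ∧ g m = g' m := fun m => by
    have := congrFun h m
    simpa [tagg, Nat.pair_eq_pair] using this
  exact ⟨(h1 0).1, funext fun m => (h1 m).2⟩

theorem stp_ne (k : ℕ) : stp k ≠ fun _ => 0 := by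
  intro h
  have := congrFun h k
  simp [stp] at this

theorem wit_cont (D : Set (ℕ → ℕ)) : Continuous (wit D) := by
  refine continuous_pi fun m => ?_
  have hl : IsLocallyConstant (fun z => wit D z m) := by
    rw [IsLocallyConstant.iff_eventually_eq]
    intro z
    have h1 : ∀ᶠ y in nhds z, ∀ k ∈ Finset.range m, y k = z k := by
      rw [Filter.eventually_all_finset]
      intro k _
      have : IsOpen {y : ℕ → ℕ | y k = z k} :=
        (isOpen_discrete ({z k} : Set ℕ)).preimage
          (by fun_prop : Continuous fun y : ℕ → ℕ => y k)
      exact this.mem_nhds rfl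
    filter_upwards [h1] with y hy
    have : (∃ d ∈ D, ∀ k < m, d k = y k) ↔ (∃ d ∈ D, ∀ k < m, d k = z k) := by
      constructor
      · rintro ⟨d, hd, h⟩
        exact ⟨d, hd, fun k hk => (h k hk).trans (hy k (Finset.mem_range.2 hk))⟩
      · rintro ⟨d, hd, h⟩
        exact ⟨d, hd, fun k hk => (h k hk).trans (hy k (Finset.mem_range.2 hk)).symm⟩
    simp only [wit]
    by_cases hc : ∃ d ∈ D, ∀ k < m, d k = z k
    · rw [if_pos hc, if_pos (this.2 hc)]
    · rw [if_neg hc, if_neg (fun h => hc (this.1 h))]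
  exact hl.continuous

theorem wit_mem {D : Set (ℕ → ℕ)} {z : ℕ → ℕ} (hz : z ∈ D) : wit D z = fun _ => 0 := by
  funext m
  simp only [wit]
  rw [if_pos ⟨z, hz, fun _ _ => rfl⟩]

theorem wit_not_mem {D : Set (ℕ → ℕ)} (hD : IsClosed D) {z : ℕ → ℕ} (hz : z ∉ D) :
    ∃ k, wit D z = stp k := by
  classical
  have hex : ∃ m, ¬ ∃ d ∈ D, ∀ k < m, d k = z k := by
    by_contra hcon
    push Not at hcon
    choose d hd hdk using hcon
    apply hz
    refine hD.mem_of_tendsto (b := Filter.atTop) (f := d) ?_ (Filter.Eventually.of_forall hd)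
    rw [tendsto_pi_nhds]
    intro k
    refine tendsto_const_nhds.congr' ?_
    filter_upwards [Filter.eventually_gt_atTop k] with m hm
    exact (hdk m k hm).symm
  refine ⟨Nat.find hex, ?_⟩
  funext m
  simp only [wit, stp]
  by_cases hm : m < Nat.find hex
  · have := Nat.find_min hex hm
    rw [not_not] at this
    rw [if_pos this, if_pos hm]
  · rw [if_neg hm, if_neg]
    rintro ⟨d, hd, h⟩
    exact Nat.find_spec hex ⟨d, hd, fun k hk => h k (lt_of_lt_of_le hk (not_lt.1 hm))⟩

noncomputable def codeEl (D : ℕ → ℕ → Set (ℕ → ℕ)) (p : ℕ → ℕ → ℕ) :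
    ℕ × (ℕ ⊕ ℕ × ℕ) → (ℕ → ℕ)
  | (n, Sum.inl k) => tagg n (stp k)
  | (n, Sum.inr (j, l)) => tagg n (wit (D n j) (p l))

theorem codeEl_cont (D : ℕ → ℕ → Set (ℕ → ℕ)) (t : ℕ × (ℕ ⊕ ℕ × ℕ)) :
    Continuous (fun p => codeEl D p t) := by
  obtain ⟨n, k | ⟨j, l⟩⟩ := t
  · exact continuous_const
  · refine continuous_pi fun m => ?_
    have h1 : Continuous fun p : ℕ → ℕ → ℕ => wit (D n j) (p l) m :=
      (continuous_apply m).comp ((wit_cont _).comp (continuous_apply l))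
    exact (continuous_of_discreteTopology (f := fun a : ℕ => Nat.pair n a)).comp h1

theorem codeEl_sub {D : ℕ → ℕ → Set (ℕ → ℕ)} (hD : ∀ n j, IsClosed (D n j))
    {p q : ℕ → ℕ → ℕ} (h : ∀ n, (∃ l j, p l ∈ D n j) → ∃ l j, q l ∈ D n j)
    (t : ℕ × (ℕ ⊕ ℕ × ℕ)) : ∃ t', codeEl D p t = codeEl D q t' := by
  obtain ⟨n, k | ⟨j, l⟩⟩ := t
  · exact ⟨(n, Sum.inl k), rfl⟩
  · by_cases hm : p l ∈ D n j
    · obtain ⟨l', j', hq⟩ := h n ⟨l, j, hm⟩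
      refine ⟨(n, Sum.inr (j', l')), ?_⟩
      simp only [codeEl, wit_mem hm, wit_mem hq]
    · obtain ⟨k, hk⟩ := wit_not_mem (hD n j) hm
      exact ⟨(n, Sum.inl k), by simp only [codeEl, hk]⟩

theorem codeEl_sub' {D : ℕ → ℕ → Set (ℕ → ℕ)} (hD : ∀ n j, IsClosed (D n j))
    {p q : ℕ → ℕ → ℕ} (h : ∀ t, ∃ t', codeEl D p t = codeEl D q t')
    (n : ℕ) (hp : ∃ l j, p l ∈ D n j) : ∃ l j, q l ∈ D n j := by
  obtain ⟨l, j, hp⟩ := hp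
  obtain ⟨⟨n', k | ⟨j', l'⟩⟩, ht⟩ := h (n, Sum.inr (j, l))
  · simp only [codeEl, wit_mem hp] at ht
    exact absurd (tagg_inj ht).2.symm (stp_ne k)
  · simp only [codeEl, wit_mem hp] at ht
    obtain ⟨rfl, h2⟩ := tagg_inj ht
    refine ⟨l', j', ?_⟩
    by_contra hq
    obtain ⟨k, hk⟩ := wit_not_mem (hD n j') hq
    exact stp_ne k (hk.symm.trans h2.symm)

/-- if `E` is a `Σ⁰_2` (here `SigmaLevel _ 1`) equivalence relation on
`ℕ → ℕ`, then every `E⁺`-learnable countable family of pairwise nonisomorphic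
structures is `=_{ℕ^ℕ}^+`-learnable. -/
theorem stmt_18 {ι : Type} [Countable ι] (ar : ι → ℕ) (har : ∃ i, 2 ≤ ar i)
    (E : (ℕ → ℕ) → (ℕ → ℕ) → Prop) (hE : Equivalence E)
    (hSigma : {x : (ℕ → ℕ) × (ℕ → ℕ) | E x.1 x.2} ∈
      SigmaLevel ((ℕ → ℕ) × (ℕ → ℕ)) 1) :
    ∀ K : Set (Md ι ar), GoodFamily K →
      Learnable (FSJump E) K →
        Learnable (FSJump (· = · : (ℕ → ℕ) → (ℕ → ℕ) → Prop)) K := by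
  intro K hK ⟨Γ, hΓ, hiso⟩
  obtain ⟨A, hA, hEA⟩ := hSigma
  have hEA' : ∀ z w, E z w ↔ ∃ j, (z, w) ∉ A j := by
    intro z w
    have := Set.ext_iff.1 hEA (z, w)
    simpa using this
  rcases K.eq_empty_or_nonempty with rfl | hne
  · have : IsEmpty (LearnDom (∅ : Set (Md ι ar))) := ⟨by rintro ⟨S, B, hB, _⟩; exact hB⟩
    exact ⟨fun S => isEmptyElim S, continuous_of_const fun S => isEmptyElim S,
      fun S => isEmptyElim S⟩
  have hrefl : ∀ B : Md ι ar, Iso B B := fun B =>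
    ⟨id, Function.bijective_id, fun i v => rfl⟩
  obtain ⟨F, hF⟩ := hK.1.exists_eq_range hne
  have hFL : ∀ a, F a ∈ LearnDom K := fun a => ⟨F a, hF ▸ Set.mem_range_self a, hrefl _⟩
  let x : ℕ → ℕ → ℕ := fun n => Γ ⟨F n.unpair.1, hFL _⟩ n.unpair.2
  let D : ℕ → ℕ → Set (ℕ → ℕ) := fun n j => {z | (z, x n) ∉ A j}
  have hD : ∀ n j, IsClosed (D n j) := by
    intro n j
    have h1 : IsOpen (A j) := hA j
    exact h1.isClosed_compl.preimage (by fun_prop : Continuous fun z : ℕ → ℕ => (z, x n))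
  have hDE : ∀ n z, (∃ j, z ∈ D n j) ↔ E z (x n) := fun n z => (hEA' z (x n)).symm
  obtain ⟨e⟩ : Nonempty (ℕ ≃ ℕ × (ℕ ⊕ ℕ × ℕ)) := ⟨(Denumerable.eqv _).symm⟩
  have key : ∀ S S' : LearnDom K,
      (∀ n, (∃ l j, Γ S l ∈ D n j) → ∃ l j, Γ S' l ∈ D n j) →
      ∀ k, ∃ l, E (Γ S k) (Γ S' l) := by
    intro S S' h k
    obtain ⟨B, hB, hSB⟩ := S.2
    rw [hF] at hB
    obtain ⟨a, rfl⟩ := hB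
    have hj := (hiso S ⟨F a, hFL a⟩).1 hSB
    obtain ⟨i, hi⟩ := hj.1 k
    have hx : x (Nat.pair a i) = Γ ⟨F a, hFL a⟩ i := by
      simp only [x, Nat.unpair_pair]
    obtain ⟨j, hj⟩ := (hDE (Nat.pair a i) (Γ S k)).2 (hx ▸ hi)
    obtain ⟨l, j', hl⟩ := h (Nat.pair a i) ⟨k, j, hj⟩
    have h3 := (hDE _ _).1 ⟨j', hl⟩
    rw [hx] at h3
    exact ⟨l, hE.trans hi (hE.symm h3)⟩
  have inv : ∀ S S' : LearnDom K, (∀ k, ∃ l, E (Γ S k) (Γ S' l)) →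
      (∀ n, (∃ l j, Γ S l ∈ D n j) → ∃ l j, Γ S' l ∈ D n j) := by
    rintro S S' h n ⟨l, hl⟩
    obtain ⟨l', hl'⟩ := h l
    exact ⟨l', (hDE _ _).2 (hE.trans (hE.symm hl') ((hDE _ _).1 hl))⟩
  refine ⟨fun S t => codeEl D (Γ S) (e t), ?_, ?_⟩
  · exact continuous_pi fun t => (codeEl_cont D (e t)).comp hΓ
  · intro S S'
    rw [hiso S S']
    constructor
    · rintro ⟨h1, h2⟩
      constructor
      · intro t
        obtain ⟨t', ht⟩ := codeEl_sub hD (inv S S' h1) (e t)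
        exact ⟨e.symm t', by simpa using ht⟩
      · intro t
        obtain ⟨t', ht⟩ := codeEl_sub hD (inv S' S h2) (e t)
        exact ⟨e.symm t', by simpa using ht⟩
    · rintro ⟨h1, h2⟩
      refine ⟨key S S' (codeEl_sub' hD fun t => ?_), key S' S (codeEl_sub' hD fun t => ?_)⟩
      · obtain ⟨l, hl⟩ := h1 (e.symm t)
        exact ⟨e l, by simpa using hl⟩
      · obtain ⟨l, hl⟩ := h2 (e.symm t)
        exact ⟨e l, by simpa using hl⟩
end
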